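/- arXiv:2605.08358 — 2 statements merged into one kernel-verified Lean document; each statement's English description precedes it below -/
import Mathlib

section
/- For every N ∈ ℕ and every γ > 0 there exists a function Φ that maps each finite sequence (q_1,…,q_t) of row vectors in ℝ^N to either an N×N positive semidefinite matrix or to the symbol FAIL, with Φ(empty sequence) = γ²·I, such that for every finite sequence (q_1,…,q_m) of row vectors in ℝ^N the following hold for each t ∈ {1,…,m}: (i) if Φ(q_1,…,q_{t−1}) = FAIL then Φ(q_1,…,q_t) = FAIL; (ii) if Φ(q_1,…,q_t) is a matrix X_t (so that by (i) X_{t−1} := Φ(q_1,…,q_{t−1}) is also a matrix, with X_0 = γ²·I), then X_{t−1} ⪯ X_t, X_t ⪰ q_tᵀq_t, and tr(X_t) ≤ 3γ²N; (iii) if Φ(q_1,…,q_{t−1}) is a matrix but Φ(q_1,…,q_t) = FAIL, then every N×N positive semidefinite matrix X satisfying X ⪰ q_iᵀq_i for all i ∈ {1,…,t} has tr(X) > γ²N. -/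
open Matrix

lemma aux_quad {N : ℕ} {M : Matrix (Fin N) (Fin N) ℝ} (h : M.PosSemidef) (v : Fin N → ℝ) :
    0 ≤ v ⬝ᵥ (M *ᵥ v) := by
  simpa using h.dotProduct_mulVec_nonneg v

lemma aux_symm {N : ℕ} {M : Matrix (Fin N) (Fin N) ℝ} (h : M.IsHermitian) (u v : Fin N → ℝ) :
    u ⬝ᵥ (M *ᵥ v) = (M *ᵥ u) ⬝ᵥ v := by
  have h' : Mᵀ = M := by simpa [IsHermitian, conjTranspose_eq_transpose_of_trivial] using h
  rw [dotProduct_mulVec, ← mulVec_transpose, h']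

lemma aux_vmv {N : ℕ} (q v : Fin N → ℝ) : vecMulVec q q *ᵥ v = (q ⬝ᵥ v) • q := by
  rw [vecMulVec_mulVec]
  simp

lemma aux_vmv_psd {N : ℕ} (q : Fin N → ℝ) : (vecMulVec q q).PosSemidef := by
  simpa using posSemidef_vecMulVec_self_star q

lemma aux_vmv_herm {N : ℕ} (q : Fin N → ℝ) : (vecMulVec q q).IsHermitian :=
  (aux_vmv_psd q).1

/-- square root is operator monotone -/
lemma aux_mono {N : ℕ} {X A : Matrix (Fin N) (Fin N) ℝ} (hX : X.PosSemidef)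
    (hA : A.IsHermitian) (h : (X * X - A * A).PosSemidef) : (X - A).PosSemidef := by
  have hD : (X - A).IsHermitian := hX.1.sub hA
  rw [hD.posSemidef_iff_eigenvalues_nonneg]
  intro i
  by_contra hneg
  simp only [Pi.zero_apply, not_le] at hneg
  set l := hD.eigenvalues i with hl
  set v : Fin N → ℝ := (hD.eigenvectorBasis i).ofLp with hv
  have hev : (X - A) *ᵥ v = l • v := hD.mulVec_eigenvectorBasis i
  have hvne : v ≠ 0 := by
    intro h0
    apply hD.eigenvectorBasis.toBasis.ne_zero i
    simp only [OrthonormalBasis.coe_toBasis]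
    ext j
    exact congrFun h0 j
  have hvv : 0 < v ⬝ᵥ v := by
    have := dotProduct_star_self_pos_iff.2 hvne
    simpa using this
  have hAv : A *ᵥ v = X *ᵥ v - l • v := by
    rw [← hev, sub_mulVec]; simp
  have h1 := aux_quad h v
  rw [sub_mulVec, dotProduct_sub, ← mulVec_mulVec, ← mulVec_mulVec, aux_symm hX.1,
    aux_symm hA, hAv] at h1
  simp only [sub_dotProduct, dotProduct_sub, smul_dotProduct, dotProduct_smul, smul_eq_mul] at h1
  have h2 := aux_quad hX v
  rw [← aux_symm hX.1 v v] at h1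
  nlinarith [mul_nonneg (neg_pos.2 hneg).le h2, mul_pos (mul_pos_of_neg_of_neg hneg hneg) hvv]

lemma aux_trace_mul {N : ℕ} {A D : Matrix (Fin N) (Fin N) ℝ} (hA : A.PosSemidef)
    (hD : D.PosSemidef) : 0 ≤ (A * D).trace := by
  obtain ⟨S, hS⟩ : ∃ S : Matrix (Fin N) (Fin N) ℝ, D = Sᴴ * S := by
    open scoped MatrixOrder in
    have h := (CFC.sqrt_nonneg D).posSemidef
    refine ⟨CFC.sqrt D, ?_⟩
    rw [h.1.eq, CFC.sqrt_mul_sqrt_self D hD.nonneg]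
  rw [hS, ← Matrix.mul_assoc, trace_mul_comm, ← Matrix.mul_assoc]
  exact (hA.mul_mul_conjTranspose_same S).trace_nonneg

lemma aux_sqrt {N : ℕ} {M : Matrix (Fin N) (Fin N) ℝ} (hM : M.PosDef) :
    ∃ X : Matrix (Fin N) (Fin N) ℝ, X.PosDef ∧ X * X = M := by
  open scoped MatrixOrder in
  have h := (CFC.sqrt_nonneg M).posSemidef
  have h2 : CFC.sqrt M * CFC.sqrt M = M := CFC.sqrt_mul_sqrt_self M hM.posSemidef.nonneg
  refine ⟨CFC.sqrt M, ?_, h2⟩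
  rw [h.posDef_iff_det_ne_zero]
  intro h0
  have : M.det = 0 := by rw [← h2, det_mul, h0, zero_mul]
  exact hM.det_pos.ne' this

lemma aux_inv {N : ℕ} {X : Matrix (Fin N) (Fin N) ℝ} (hX : X.PosDef) :
    X * X⁻¹ = 1 ∧ X⁻¹ * X = 1 := by
  have : IsUnit X.det := (isUnit_iff_isUnit_det X).1 hX.isUnit
  exact ⟨mul_nonsing_inv X this, nonsing_inv_mul X this⟩

lemma aux_dual {N : ℕ} {X Z : Matrix (Fin N) (Fin N) ℝ} (hZ : Z.PosDef) (hX : X.IsHermitian) :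
    2 * X.trace ≤ Z.trace + (X * X * Z⁻¹).trace := by
  obtain ⟨h1, h2⟩ := aux_inv hZ
  have h := (hZ.inv.posSemidef.conjTranspose_mul_mul_same (Z - X)).trace_nonneg
  have e : (Z - X)ᴴ * Z⁻¹ * (Z - X) = Z - X - X + X * Z⁻¹ * X := by
    rw [(hZ.1.sub hX).eq, Matrix.sub_mul, h1, Matrix.sub_mul, Matrix.mul_sub]
    simp only [Matrix.one_mul, Matrix.mul_one]
    rw [Matrix.mul_sub, Matrix.mul_assoc X Z⁻¹ Z, h2, Matrix.mul_one]
    abel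
  rw [e, trace_add, trace_sub, trace_sub, trace_mul_comm, ← Matrix.mul_assoc] at h
  linarith

lemma aux_trace_vmv {N : ℕ} (M : Matrix (Fin N) (Fin N) ℝ) (q : Fin N → ℝ) :
    (vecMulVec q q * M).trace = q ⬝ᵥ (M *ᵥ q) := by
  rw [trace_mul_comm, mul_vecMulVec, trace_vecMulVec, dotProduct_comm]

lemma aux_dom_of {N : ℕ} {X : Matrix (Fin N) (Fin N) ℝ} (hX : X.PosDef) (q : Fin N → ℝ)
    (h : q ⬝ᵥ (X⁻¹ *ᵥ q) ≤ 1) : (X - vecMulVec q q).PosSemidef := by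
  refine PosSemidef.of_dotProduct_mulVec_nonneg (hX.1.sub (aux_vmv_herm q)) fun v => ?_
  have hXu : X *ᵥ (X⁻¹ *ᵥ q) = q := by rw [mulVec_mulVec, (aux_inv hX).1, one_mulVec]
  have h0 := aux_quad hX.posSemidef (v - (q ⬝ᵥ v) • (X⁻¹ *ᵥ q))
  rw [mulVec_sub, mulVec_smul, hXu] at h0
  simp only [sub_dotProduct, dotProduct_sub, smul_dotProduct, dotProduct_smul, smul_eq_mul] at h0
  rw [aux_symm hX.1 (X⁻¹ *ᵥ q) v, hXu, dotProduct_comm v q, dotProduct_comm (X⁻¹ *ᵥ q) q] at h0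
  simp only [star_trivial, sub_mulVec, dotProduct_sub, aux_vmv, dotProduct_smul, smul_eq_mul]
  rw [dotProduct_comm v q]
  nlinarith [mul_nonneg (mul_self_nonneg (q ⬝ᵥ v)) (sub_nonneg.2 h)]

lemma aux_of_dom {N : ℕ} {X : Matrix (Fin N) (Fin N) ℝ} (hX : X.PosDef) (q : Fin N → ℝ)
    (h : (X - vecMulVec q q).PosSemidef) : q ⬝ᵥ (X⁻¹ *ᵥ q) ≤ 1 := by
  have hXu : X *ᵥ (X⁻¹ *ᵥ q) = q := by rw [mulVec_mulVec, (aux_inv hX).1, one_mulVec]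
  have h0 := aux_quad h (X⁻¹ *ᵥ q)
  rw [sub_mulVec, hXu, aux_vmv, dotProduct_sub, dotProduct_smul, smul_eq_mul,
    dotProduct_comm (X⁻¹ *ᵥ q) q] at h0
  have := aux_quad hX.inv.posSemidef q
  nlinarith

lemma aux_entry {N : ℕ} {D : Matrix (Fin N) (Fin N) ℝ} (hD : D.IsHermitian) (i j : Fin N) :
    D i j ^ 2 ≤ (D * D).trace := by
  have hs : ∀ a b, D a b = D b a := fun a b => by simpa using (hD.apply a b).symm
  have e : (D * D).trace = ∑ a, ∑ b, D a b ^ 2 := by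
    simp only [trace, diag_apply, mul_apply]
    refine Finset.sum_congr rfl fun a _ => Finset.sum_congr rfl fun b _ => ?_
    rw [hs b a]; ring
  rw [e]
  refine le_trans ?_ (Finset.single_le_sum (f := fun a => ∑ b, D a b ^ 2)
    (fun a _ => Finset.sum_nonneg fun b _ => sq_nonneg _) (Finset.mem_univ i))
  exact Finset.single_le_sum (f := fun b => D i b ^ 2) (fun b _ => sq_nonneg _) (Finset.mem_univ j)

lemma aux_holder {N : ℕ} {A B : Matrix (Fin N) (Fin N) ℝ} (hA : A.PosDef) (hB : B.PosDef)
    (q : Fin N → ℝ) (d : ℝ) (hd : 0 ≤ d) (h : B * B - A * A = d • vecMulVec q q) (i j : Fin N) :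
    (B i j - A i j) ^ 2 ≤ d * (q ⬝ᵥ q) := by
  have hD : (B - A).PosSemidef := by
    apply aux_mono hB.posSemidef hA.1
    rw [h]
    exact (aux_vmv_psd q).smul hd
  have h1 := aux_entry hD.1 i j
  have h2 := aux_trace_mul hA.posSemidef hD
  have h3 : (B - A) * (B - A) = d • vecMulVec q q - A * (B - A) - (B - A) * A := by
    rw [← h]; noncomm_ring
  rw [h3, trace_sub, trace_sub, trace_mul_comm (B - A) A, trace_smul, trace_vecMulVec] at h1
  simp only [Matrix.sub_apply, smul_eq_mul] at h1
  linarith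

lemma aux_step {N : ℕ} {X : Matrix (Fin N) (Fin N) ℝ} (hX : X.PosDef) (q : Fin N → ℝ) :
    ∃ (X' : Matrix (Fin N) (Fin N) ℝ) (w : ℝ), 0 ≤ w ∧ X'.PosDef ∧
      X' * X' = X * X + w • vecMulVec q q ∧ (X' - X).PosSemidef ∧
      (X' - vecMulVec q q).PosSemidef ∧ w ≤ 2 * (X'.trace - X.trace) := by
  by_cases h1 : q ⬝ᵥ (X⁻¹ *ᵥ q) ≤ 1
  · exact ⟨X, 0, le_rfl, hX, by simp, by simpa using PosSemidef.zero, aux_dom_of hX q h1, by simp⟩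
  push Not at h1
  have hXX : (X * X).PosDef := by
    have hps : (X * X).PosSemidef := by
      have := posSemidef_conjTranspose_mul_self X
      rwa [hX.1.eq] at this
    rw [hps.posDef_iff_det_ne_zero, det_mul]
    exact (mul_pos hX.det_pos hX.det_pos).ne'
  have hex : ∀ w : ℝ, ∃ Y : Matrix (Fin N) (Fin N) ℝ, Y.PosDef ∧
      Y * Y = X * X + max w 0 • vecMulVec q q := fun w =>
    aux_sqrt (hXX.add_posSemidef ((aux_vmv_psd q).smul (le_max_right w 0)))
  choose Y hY hYY using hex
  have hol : ∀ w w' : ℝ, ∀ i j, (Y w i j - Y w' i j) ^ 2 ≤ |w - w'| * (q ⬝ᵥ q) := by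
    have key : ∀ w w' : ℝ, w ≤ w' → ∀ i j, (Y w' i j - Y w i j) ^ 2 ≤ |w' - w| * (q ⬝ᵥ q) := by
      intro w w' hw i j
      have hm : max w 0 ≤ max w' 0 := max_le_max_right 0 hw
      refine (aux_holder (hY w) (hY w') q (max w' 0 - max w 0) (sub_nonneg.2 hm) ?_ i j).trans ?_
      · rw [hYY, hYY, sub_smul]; abel
      · refine mul_le_mul_of_nonneg_right ?_ ?_
        · exact (le_abs_self _).trans (abs_max_sub_max_le_abs w' w 0)
        · simpa using dotProduct_star_self_nonneg q
    intro w w' i j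
    rcases le_total w w' with h | h
    · have := key w w' h i j
      rw [abs_sub_comm]
      nlinarith
    · exact key w' w h i j
  have hcont : Continuous Y := by
    refine continuous_matrix fun i j => ?_
    rw [continuous_iff_continuousAt]
    intro w
    rw [ContinuousAt, tendsto_iff_dist_tendsto_zero]
    have hb : Filter.Tendsto (fun w' => √(|w' - w| * (q ⬝ᵥ q))) (nhds w) (nhds 0) := by
      have : Continuous (fun w' => √(|w' - w| * (q ⬝ᵥ q))) := by fun_prop
      simpa using this.tendsto w
    refine squeeze_zero (fun _ => dist_nonneg) (fun w' => ?_) hb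
    rw [Real.dist_eq]
    exact Real.abs_le_sqrt (hol w' w i j)
  have hcinv : Continuous fun w => (Y w)⁻¹ := by
    simp only [inv_def, Ring.inverse_eq_inv']
    exact (hcont.matrix_det.inv₀ fun w => (hY w).det_pos.ne').smul hcont.matrix_adjugate
  have hg : Continuous fun w => q ⬝ᵥ ((Y w)⁻¹ *ᵥ q) :=
    continuous_const.dotProduct (hcinv.matrix_mulVec continuous_const)
  have hqq : 0 ≤ q ⬝ᵥ q := by simpa using dotProduct_star_self_nonneg q
  have hY0 : q ⬝ᵥ ((Y 0)⁻¹ *ᵥ q) ≥ 1 := by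
    have h : (Y 0 - X).PosSemidef ∧ (X - Y 0).PosSemidef := by
      have e : Y 0 * Y 0 = X * X := by rw [hYY]; simp
      exact ⟨aux_mono (hY 0).posSemidef hX.1 (by rw [e, sub_self]; exact PosSemidef.zero),
        aux_mono hX.posSemidef (hY 0).1 (by rw [e, sub_self]; exact PosSemidef.zero)⟩
    have e : Y 0 = X := by
      open scoped MatrixOrder in
      exact le_antisymm (Matrix.le_iff.2 h.2) (Matrix.le_iff.2 h.1)
    rw [e]; exact h1.le
  have hYq : q ⬝ᵥ ((Y (q ⬝ᵥ q))⁻¹ *ᵥ q) ≤ 1 := by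
    apply aux_of_dom (hY _)
    apply aux_mono (hY _).posSemidef (aux_vmv_herm q)
    have e : vecMulVec q q * vecMulVec q q = (q ⬝ᵥ q) • vecMulVec q q := by
      rw [vecMulVec_mul_vecMulVec]
      ext i j
      simp [vecMulVec_apply]
      try ring
    rw [hYY, max_eq_left hqq, e, add_sub_cancel_right]
    exact hXX.posSemidef
  obtain ⟨w, hw, hw1⟩ := intermediate_value_Icc' hqq hg.continuousOn ⟨hYq, hY0⟩
  simp only at hw1
  have hww : Y w * Y w = X * X + w • vecMulVec q q := by rw [hYY, max_eq_left hw.1]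
  refine ⟨Y w, w, hw.1, hY w, hww, ?_, aux_dom_of (hY w) q hw1.le, ?_⟩
  · apply aux_mono (hY w).posSemidef hX.1
    rw [hww, add_sub_cancel_left]
    exact (aux_vmv_psd q).smul hw.1
  · have hd := aux_dual (hY w) hX.1
    have e : X * X = Y w * Y w - w • vecMulVec q q := by rw [hww]; abel
    rw [e, Matrix.sub_mul, Matrix.mul_assoc, (aux_inv (hY w)).1, Matrix.mul_one, trace_sub,
      Matrix.smul_mul, trace_smul, aux_trace_vmv, hw1, smul_eq_mul] at hd
    linarith

theorem stmt4 (N : ℕ) (γ : ℝ) (hγ : 0 < γ) :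
    ∃ Φ : List (Fin N → ℝ) → Option (Matrix (Fin N) (Fin N) ℝ),
      -- the initial matrix is γ²·I
      Φ [] = some (γ ^ 2 • (1 : Matrix (Fin N) (Fin N) ℝ)) ∧
      -- every matrix output is positive semidefinite
      (∀ l X, Φ l = some X → X.PosSemidef) ∧
      -- (i) FAIL propagates
      (∀ l q, Φ l = none → Φ (l ++ [q]) = none) ∧
      -- (ii) if a matrix is output, it extends the previous one, dominates qᵀq,
      -- and has trace at most 3γ²N
      (∀ l q X, Φ (l ++ [q]) = some X →
        ∃ X₀, Φ l = some X₀ ∧ (X - X₀).PosSemidef ∧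
          (X - vecMulVec q q).PosSemidef ∧ X.trace ≤ 3 * γ ^ 2 * N) ∧
      -- (iii) if FAIL is first declared now, no PSD matrix dominating all the
      -- observed qᵀq has trace at most γ²N
      (∀ l q, (∃ X₀, Φ l = some X₀) → Φ (l ++ [q]) = none →
        ∀ X : Matrix (Fin N) (Fin N) ℝ, X.PosSemidef →
          (∀ p ∈ l ++ [q], (X - vecMulVec p p).PosSemidef) →
          γ ^ 2 * N < X.trace) := by

  classical
  choose! S w hw hS hSS hSX hSq hSt using
    fun (X : Matrix (Fin N) (Fin N) ℝ) (hX : X.PosDef) => aux_step hX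
  let Φ : List (Fin N → ℝ) → Option (Matrix (Fin N) (Fin N) ℝ) := fun l =>
    l.foldl (fun o q => o.bind fun X =>
      if (S X q).trace ≤ 3 * γ ^ 2 * N then some (S X q) else none)
      (some (γ ^ 2 • (1 : Matrix (Fin N) (Fin N) ℝ)))
  have hg2 : 0 < γ ^ 2 := by positivity
  have hΦ0 : Φ [] = some (γ ^ 2 • (1 : Matrix (Fin N) (Fin N) ℝ)) := rfl
  have hΦs : ∀ l q, Φ (l ++ [q]) = (Φ l).bind fun X =>
      if (S X q).trace ≤ 3 * γ ^ 2 * N then some (S X q) else none := by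
    intro l q
    simp only [Φ, List.foldl_append, List.foldl_cons, List.foldl_nil]
  have hinv : ∀ l X, Φ l = some X → X.PosDef ∧
      ∀ Z : Matrix (Fin N) (Fin N) ℝ, Z.PosDef → (∀ p ∈ l, (Z - vecMulVec p p).PosSemidef) →
        (X * X * Z⁻¹).trace ≤ γ ^ 4 * Z⁻¹.trace + 2 * (X.trace - γ ^ 2 * N) := by
    intro l
    induction l using List.reverseRecOn with
    | nil =>
      intro X hX
      rw [hΦ0, Option.some.injEq] at hX
      subst hX
      refine ⟨PosDef.one.smul hg2, fun Z hZ _ => ?_⟩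
      simp [trace_smul]
      apply le_of_eq
      ring
    | append_singleton l q ih =>
      intro X' hX'
      rw [hΦs] at hX'
      obtain ⟨X, hX, hX2⟩ := Option.bind_eq_some_iff.1 hX'
      split_ifs at hX2 with hc
      rw [Option.some.injEq] at hX2
      subst hX2
      obtain ⟨hpd, ih2⟩ := ih X hX
      refine ⟨hS X hpd q, fun Z hZ hp => ?_⟩
      have h1 := ih2 Z hZ fun p hpl => hp p (by simp [hpl])
      have h2 := aux_of_dom hZ q (hp q (by simp))
      rw [hSS X hpd q, Matrix.add_mul, trace_add, Matrix.smul_mul, trace_smul, aux_trace_vmv,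
        smul_eq_mul]
      have h3 := hSt X hpd q
      nlinarith [mul_le_mul_of_nonneg_left h2 (hw X hpd q)]
  refine ⟨Φ, hΦ0, fun l X h => (hinv l X h).1.posSemidef, fun l q h => by rw [hΦs, h]; rfl, ?_, ?_⟩
  · intro l q X' hX'
    rw [hΦs] at hX'
    obtain ⟨X, hX, hX2⟩ := Option.bind_eq_some_iff.1 hX'
    split_ifs at hX2 with hc
    rw [Option.some.injEq] at hX2
    subst hX2
    have hpd := (hinv l X hX).1
    exact ⟨X, hX, hSX X hpd q, hSq X hpd q, hc⟩
  · rintro l q ⟨X, hX⟩ hnone Y hY hYp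
    by_contra hcon
    push Not at hcon
    rw [hΦs, hX, Option.bind_some] at hnone
    split_ifs at hnone with hc
    apply hc
    obtain ⟨hpd, hi⟩ := hinv l X hX
    set c : ℝ := γ ^ 2 / 2 with hcdef
    have hcpos : 0 < c := by positivity
    set Z : Matrix (Fin N) (Fin N) ℝ := c • 1 + Y with hZdef
    have hZ : Z.PosDef := (PosDef.one.smul hcpos).add_posSemidef hY
    have hZp : ∀ p ∈ l ++ [q], (Z - vecMulVec p p).PosSemidef := by
      intro p hp
      have : Z - vecMulVec p p = c • 1 + (Y - vecMulVec p p) := by rw [hZdef]; abel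
      rw [this]
      exact (PosSemidef.one.smul hcpos.le).add (hYp p hp)
    have hZtr : Z.trace = c * N + Y.trace := by simp [hZdef, trace_add, trace_smul]
    obtain ⟨hz1, hz2⟩ := aux_inv hZ
    -- trace of the inverse
    have hZinv : c * Z⁻¹.trace ≤ N := by
      have h := aux_trace_mul hY hZ.inv.posSemidef
      have e : Y * Z⁻¹ = 1 - c • Z⁻¹ := by
        have : Y = Z - c • 1 := by rw [hZdef]; abel
        rw [this, Matrix.sub_mul, hz1, Matrix.smul_mul, Matrix.one_mul]
      rw [e, trace_sub, trace_smul, trace_one, Fintype.card_fin, smul_eq_mul] at h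
      linarith
    have h1 := hi Z hZ fun p hpl => hZp p (by simp [hpl])
    have h2 := aux_of_dom hZ q (hZp q (by simp))
    have h3 := hSt X hpd q
    have h4 : (S X q * S X q * Z⁻¹).trace ≤
        γ ^ 4 * Z⁻¹.trace + 2 * ((S X q).trace - γ ^ 2 * N) := by
      rw [hSS X hpd q, Matrix.add_mul, trace_add, Matrix.smul_mul, trace_smul, aux_trace_vmv,
        smul_eq_mul]
      nlinarith [mul_le_mul_of_nonneg_left h2 (hw X hpd q)]
    -- scale by 2
    have h5 := aux_dual (Z := (2 : ℝ) • Z) (hZ.smul two_pos) (hS X hpd q).1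
    have e2 : ((2 : ℝ) • Z)⁻¹ = (1 / 2 : ℝ) • Z⁻¹ := by
      apply inv_eq_right_inv
      rw [Matrix.smul_mul, Matrix.mul_smul, hz1, smul_smul]
      norm_num
    rw [e2, Matrix.mul_smul, trace_smul, trace_smul, smul_eq_mul, smul_eq_mul, hZtr] at h5
    have h6 : γ ^ 4 * Z⁻¹.trace ≤ 2 * γ ^ 2 * N := by
      have := mul_le_mul_of_nonneg_left hZinv (by positivity : (0 : ℝ) ≤ 2 * γ ^ 2)
      calc γ ^ 4 * Z⁻¹.trace = 2 * γ ^ 2 * (c * Z⁻¹.trace) := by rw [hcdef]; ring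
        _ ≤ _ := this
    have h7 : c * N = γ ^ 2 * N / 2 := by rw [hcdef]; ring
    linarith
end

section
/- For every c > 0 there is a constant K(c) > 0 such that for every N ∈ ℕ there exists an online factorization algorithm in the row arrival model for matrices with N columns with the following guarantee: for every m ∈ ℕ and every m×N real matrix Q with rows q_1,…,q_m such that q_1 ≠ 0, when the algorithm is run on (q_1,…,q_m) it outputs matrices R_t and row vectors ℓ_t satisfying ‖R_t‖_{1→2} ≤ 1 for every t ∈ {1,…,m} and max_{t∈{1,…,m}} ‖ℓ_t‖_2 ≤ K(c)·γ2(Q)·(1 + log₂(γ2(Q)/‖q_1‖_∞))^{1/2+c}·(log₂(2N))³. -/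
open Matrix

/-- `‖M‖_{2→∞}`: the maximum ℓ2 norm of a row of `M`. -/
noncomputable def rowNorm2inf {α β : Type*} [Fintype α] [Fintype β] (M : Matrix α β ℝ) : ℝ :=
  ⨆ i, Real.sqrt (∑ j, (M i j) ^ 2)

/-- `‖M‖_{1→2}`: the maximum ℓ2 norm of a column of `M`. -/
noncomputable def colNorm12 {α β : Type*} [Fintype α] [Fintype β] (M : Matrix α β ℝ) : ℝ :=
  ⨆ j, Real.sqrt (∑ i, (M i j) ^ 2)

/-- The γ₂ factorization norm. -/
noncomputable def gamma2 {α β : Type*} [Fintype α] [Fintype β] (A : Matrix α β ℝ) : ℝ :=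
  sInf { c : ℝ | ∃ (k : ℕ) (L : Matrix α (Fin k) ℝ) (R : Matrix (Fin k) β ℝ),
    L * R = A ∧ c = rowNorm2inf L * colNorm12 R }

namespace OF

/-- quadratic form -/
noncomputable def qf {n : ℕ} (X : Matrix (Fin n) (Fin n) ℝ) (y : Fin n → ℝ) : ℝ := y ⬝ᵥ (X *ᵥ y)

/-- compression by a diagonal -/
noncomputable def cmp {n : ℕ} (d : Fin n → ℝ) (X : Matrix (Fin n) (Fin n) ℝ) :
    Matrix (Fin n) (Fin n) ℝ := Matrix.of fun i j => d i * X i j * d j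

structure PSD {n : ℕ} (X : Matrix (Fin n) (Fin n) ℝ) : Prop where
  symm : Xᵀ = X
  nonneg : ∀ y, 0 ≤ qf X y

variable {n : ℕ}

lemma qf_add (X Y : Matrix (Fin n) (Fin n) ℝ) (y : Fin n → ℝ) : qf (X + Y) y = qf X y + qf Y y := by
  simp [qf, add_mulVec, dotProduct_add]

lemma qf_sub (X Y : Matrix (Fin n) (Fin n) ℝ) (y : Fin n → ℝ) : qf (X - Y) y = qf X y - qf Y y := by
  simp [qf, sub_mulVec, dotProduct_sub]

lemma qf_smul (c : ℝ) (X : Matrix (Fin n) (Fin n) ℝ) (y : Fin n → ℝ) :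
    qf (c • X) y = c * qf X y := by
  simp [qf, smul_mulVec, dotProduct_smul]

lemma qf_one (y : Fin n → ℝ) : qf 1 y = y ⬝ᵥ y := by simp [qf]

lemma qf_zero (y : Fin n → ℝ) : qf 0 y = 0 := by simp [qf]

lemma qf_sum {ι : Type*} (s : Finset ι) (X : ι → Matrix (Fin n) (Fin n) ℝ) (y : Fin n → ℝ) :
    qf (∑ i ∈ s, X i) y = ∑ i ∈ s, qf (X i) y := by
  classical
  induction s using Finset.induction_on with
  | empty => simp [qf_zero]
  | insert a s ha ih => rw [Finset.sum_insert ha, Finset.sum_insert ha, qf_add, ih]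

lemma vmv_mulVec (z y : Fin n → ℝ) : vecMulVec z z *ᵥ y = (z ⬝ᵥ y) • z := by
  ext i
  simp [vecMulVec, mulVec, dotProduct, Finset.sum_mul, Finset.mul_sum]
  apply Finset.sum_congr rfl
  intros; ring

lemma qf_vmv (z y : Fin n → ℝ) : qf (vecMulVec z z) y = (z ⬝ᵥ y) ^ 2 := by
  rw [qf, vmv_mulVec, dotProduct_smul, smul_eq_mul, dotProduct_comm y z, sq]

lemma cmp_mulVec (d : Fin n → ℝ) (X : Matrix (Fin n) (Fin n) ℝ) (y : Fin n → ℝ) :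
    cmp d X *ᵥ y = d * (X *ᵥ (d * y)) := by
  ext i
  simp [cmp, mulVec, dotProduct, Finset.mul_sum]
  apply Finset.sum_congr rfl
  intros; ring

lemma dot_mul (d x y : Fin n → ℝ) : (d * x) ⬝ᵥ y = x ⬝ᵥ (d * y) := by
  simp [dotProduct]
  apply Finset.sum_congr rfl
  intros; ring

lemma qf_cmp (d : Fin n → ℝ) (X : Matrix (Fin n) (Fin n) ℝ) (y : Fin n → ℝ) :
    qf (cmp d X) y = qf X (d * y) := by
  rw [qf, cmp_mulVec, ← dot_mul, qf]

lemma qf_single (X : Matrix (Fin n) (Fin n) ℝ) (j : Fin n) : qf X (Pi.single j 1) = X j j := by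
  simp [qf]

lemma dot_self_nonneg (y : Fin n → ℝ) : 0 ≤ y ⬝ᵥ y :=
  Finset.sum_nonneg fun i _ => mul_self_nonneg _

lemma dot_self_mask_le (d y : Fin n → ℝ) (hd : ∀ j, d j ^ 2 ≤ 1) : (d * y) ⬝ᵥ (d * y) ≤ y ⬝ᵥ y := by
  apply Finset.sum_le_sum
  intro i _
  simp
  nlinarith [hd i, mul_self_nonneg (y i)]

namespace PSD
variable {X Y : Matrix (Fin n) (Fin n) ℝ}

lemma bil_comm (hX : PSD X) (x y : Fin n → ℝ) : x ⬝ᵥ (X *ᵥ y) = y ⬝ᵥ (X *ᵥ x) := by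
  rw [dotProduct_mulVec, ← mulVec_transpose, hX.symm, dotProduct_comm]

lemma add (hX : PSD X) (hY : PSD Y) : PSD (X + Y) :=
  ⟨by rw [transpose_add, hX.symm, hY.symm], fun y => by
    rw [qf_add]; exact add_nonneg (hX.nonneg y) (hY.nonneg y)⟩

lemma smul (hX : PSD X) {c : ℝ} (hc : 0 ≤ c) : PSD (c • X) :=
  ⟨by rw [transpose_smul, hX.symm], fun y => by
    rw [qf_smul]; exact mul_nonneg hc (hX.nonneg y)⟩

lemma zero : PSD (0 : Matrix (Fin n) (Fin n) ℝ) := ⟨by simp, fun y => by rw [qf_zero]⟩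

lemma one : PSD (1 : Matrix (Fin n) (Fin n) ℝ) :=
  ⟨by simp, fun y => by rw [qf_one]; exact dot_self_nonneg y⟩

lemma vmv (z : Fin n → ℝ) : PSD (vecMulVec z z) :=
  ⟨by ext i j; simp [vecMulVec, mul_comm], fun y => by rw [qf_vmv]; positivity⟩

lemma cmp (hX : PSD X) (d : Fin n → ℝ) : PSD (cmp d X) :=
  ⟨by
    ext i j
    have := congrFun (congrFun hX.symm i) j
    simp only [transpose_apply] at this
    simp [OF.cmp, this]; ring, fun y => by rw [qf_cmp]; exact hX.nonneg _⟩

lemma sum {ι : Type*} (s : Finset ι) (X : ι → Matrix (Fin n) (Fin n) ℝ) (h : ∀ i ∈ s, PSD (X i)) :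
    PSD (∑ i ∈ s, X i) := by
  classical
  induction s using Finset.induction_on with
  | empty => simpa using zero
  | insert a s ha ih =>
    rw [Finset.sum_insert ha]
    exact (h a (by simp)).add (ih fun i hi => h i (by simp [hi]))

lemma qf_add_vec (hX : PSD X) (x y : Fin n → ℝ) :
    qf X (x + y) = qf X x + 2 * (x ⬝ᵥ (X *ᵥ y)) + qf X y := by
  simp only [qf, mulVec_add, dotProduct_add, add_dotProduct]
  rw [hX.bil_comm y x]; ring

lemma qf_smul_vec (c : ℝ) (x : Fin n → ℝ) : qf X (c • x) = c ^ 2 * qf X x := by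
  simp only [qf, mulVec_smul, dotProduct_smul, smul_dotProduct, smul_eq_mul]; ring

lemma cauchy (hX : PSD X) (x y : Fin n → ℝ) : (x ⬝ᵥ (X *ᵥ y)) ^ 2 ≤ qf X x * qf X y := by
  have h := discrim_le_zero (a := qf X y) (b := 2 * (x ⬝ᵥ (X *ᵥ y))) (c := qf X x) (by
    intro t
    have := hX.nonneg (x + t • y)
    rw [hX.qf_add_vec, qf_smul_vec, mulVec_smul, dotProduct_smul, smul_eq_mul] at this
    linarith)
  rw [discrim] at h
  nlinarith

lemma two_mul_le (hX : PSD X) (x y : Fin n → ℝ) : 2 * (x ⬝ᵥ (X *ᵥ y)) ≤ qf X x + qf X y := by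
  have := hX.nonneg (x + (-1 : ℝ) • y)
  rw [hX.qf_add_vec, qf_smul_vec, mulVec_smul, dotProduct_smul, smul_eq_mul] at this
  linarith

lemma qf_sum_le (hX : PSD X) {ι : Type*} (s : Finset ι) (v : ι → Fin n → ℝ) :
    qf X (∑ i ∈ s, v i) ≤ s.card * ∑ i ∈ s, qf X (v i) := by
  have h1 : qf X (∑ i ∈ s, v i) = ∑ i ∈ s, ∑ j ∈ s, (v i ⬝ᵥ (X *ᵥ v j)) := by
    rw [qf, sum_dotProduct]
    apply Finset.sum_congr rfl
    intro i _
    rw [mulVec_sum, dotProduct_sum]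
  rw [h1]
  have h2 : ∑ i ∈ s, ∑ j ∈ s, (v i ⬝ᵥ (X *ᵥ v j)) ≤ ∑ i ∈ s, ∑ j ∈ s, ((qf X (v i) + qf X (v j)) / 2) := by
    apply Finset.sum_le_sum; intro i _
    apply Finset.sum_le_sum; intro j _
    linarith [hX.two_mul_le (v i) (v j)]
  refine h2.trans (le_of_eq ?_)
  simp only [add_div, Finset.sum_add_distrib, Finset.sum_const, nsmul_eq_mul, ← Finset.mul_sum, ← Finset.sum_div]
  ring

end PSD

/-- `S` is positive definite with lower bound `s`. -/
structure PD (S : Matrix (Fin n) (Fin n) ℝ) (s : ℝ) : Prop where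
  psd : PSD S
  pos : 0 < s
  lb : ∀ y, s * (y ⬝ᵥ y) ≤ qf S y

lemma PSD.toPD {X : Matrix (Fin n) (Fin n) ℝ} (hX : PSD X) {s : ℝ} (hs : 0 < s) : PD (X + s • 1) s :=
  ⟨hX.add (PSD.one.smul hs.le), hs, fun y => by
    rw [qf_add, qf_smul, qf_one]; linarith [hX.nonneg y]⟩

namespace PD
variable {S : Matrix (Fin n) (Fin n) ℝ} {s : ℝ}

lemma isUnit (h : PD S s) : IsUnit S := by
  rw [← mulVec_injective_iff_isUnit]
  have key : ∀ y, S *ᵥ y = 0 → y = 0 := by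
    intro y hy
    have h1 := h.lb y
    rw [qf, hy, dotProduct_zero] at h1
    have h2 := dot_self_nonneg y
    have h3 : y ⬝ᵥ y = 0 := by
      nlinarith [h.pos]
    exact dotProduct_self_eq_zero.1 h3
  intro x y hxy
  have := key (x - y) (by rw [mulVec_sub]; exact sub_eq_zero.2 hxy)
  exact sub_eq_zero.1 this

lemma mul_inv (h : PD S s) (p : Fin n → ℝ) : S *ᵥ (S⁻¹ *ᵥ p) = p := by
  rw [mulVec_mulVec, Matrix.mul_nonsing_inv _ ((Matrix.isUnit_iff_isUnit_det _).1 h.isUnit), one_mulVec]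

lemma inv_eq (h : PD S s) {p y : Fin n → ℝ} (hy : S *ᵥ y = p) : S⁻¹ *ᵥ p = y := by
  rw [← hy, mulVec_mulVec, Matrix.nonsing_inv_mul _ ((Matrix.isUnit_iff_isUnit_det _).1 h.isUnit), one_mulVec]

end PD

/-- `pᵀ S⁻¹ p` -/
noncomputable def val (S : Matrix (Fin n) (Fin n) ℝ) (p : Fin n → ℝ) : ℝ := p ⬝ᵥ (S⁻¹ *ᵥ p)

namespace PD
variable {S S' : Matrix (Fin n) (Fin n) ℝ} {s s' : ℝ}

lemma val_eq_qf (h : PD S s) (p : Fin n → ℝ) : val S p = qf S (S⁻¹ *ᵥ p) := by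
  rw [qf, h.mul_inv, val, dotProduct_comm]

lemma val_nonneg (h : PD S s) (p : Fin n → ℝ) : 0 ≤ val S p := by
  rw [h.val_eq_qf]; exact h.psd.nonneg _

lemma dot_eq (h : PD S s) (p y : Fin n → ℝ) : p ⬝ᵥ y = (S⁻¹ *ᵥ p) ⬝ᵥ (S *ᵥ y) := by
  rw [h.psd.bil_comm, h.mul_inv, dotProduct_comm]

lemma inv_comm (h : PD S s) (p y : Fin n → ℝ) : p ⬝ᵥ (S⁻¹ *ᵥ y) = y ⬝ᵥ (S⁻¹ *ᵥ p) := by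
  rw [h.dot_eq p, h.mul_inv, dotProduct_comm]

lemma sq_le (h : PD S s) (p y : Fin n → ℝ) : (p ⬝ᵥ y) ^ 2 ≤ val S p * qf S y := by
  rw [h.dot_eq, h.val_eq_qf]; exact h.psd.cauchy _ _

lemma val_le (h : PD S s) (p : Fin n → ℝ) (c : ℝ) (hc : ∀ y, (p ⬝ᵥ y) ^ 2 ≤ c * qf S y) (hc0 : 0 ≤ c) :
    val S p ≤ c := by
  have h1 := hc (S⁻¹ *ᵥ p)
  rw [← h.val_eq_qf] at h1
  change (val S p) ^ 2 ≤ _ at h1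
  by_contra hlt
  push Not at hlt
  nlinarith

lemma val_mono (h : PD S s) (h' : PD S' s') (p p' : Fin n → ℝ) (d : Fin n → ℝ)
    (hp : p' = d * p) (hS : ∀ y, qf S (d * y) ≤ qf S' y) : val S' p' ≤ val S p := by
  apply h'.val_le _ _ _ (h.val_nonneg p)
  intro y
  rw [hp, dot_mul]
  exact (h.sq_le p _).trans (mul_le_mul_of_nonneg_left (hS y) (h.val_nonneg p))

lemma update (h : PD S s) (b : ℝ) (hb : 0 ≤ b) (z p : Fin n → ℝ) (h' : PD (S + b • vecMulVec z z) s') :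
    val (S + b • vecMulVec z z) p = val S p - b * (p ⬝ᵥ (S⁻¹ *ᵥ z)) ^ 2 / (1 + b * val S z) := by
  set w := S⁻¹ *ᵥ z with hw
  set D := 1 + b * val S z with hD
  have hDpos : 0 < D := by have := h.val_nonneg z; positivity
  have hzw : z ⬝ᵥ w = val S z := rfl
  have hzp : z ⬝ᵥ (S⁻¹ *ᵥ p) = p ⬝ᵥ w := h.inv_comm _ _
  have key : (S + b • vecMulVec z z) *ᵥ (S⁻¹ *ᵥ p - (b * (p ⬝ᵥ w) / D) • w) = p := by
    rw [add_mulVec, smul_mulVec, vmv_mulVec, mulVec_sub, h.mul_inv, mulVec_smul, hw, h.mul_inv,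
      ← hw, dotProduct_sub, dotProduct_smul, hzp, hzw, smul_eq_mul]
    ext i
    simp only [Pi.add_apply, Pi.sub_apply, Pi.smul_apply, smul_eq_mul]
    field_simp
    rw [hD]; ring
  rw [val, h'.inv_eq key, dotProduct_sub, dotProduct_smul, smul_eq_mul, val]
  ring

lemma val_le_div (h : PD S s) (p : Fin n → ℝ) : val S p ≤ (p ⬝ᵥ p) / s := by
  apply h.val_le _ _ _ (div_nonneg (dot_self_nonneg p) h.pos.le)
  intro y
  have h1 := h.lb y
  have h2 : (p ⬝ᵥ y) ^ 2 ≤ (p ⬝ᵥ p) * (y ⬝ᵥ y) := by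
    have := PSD.one.cauchy p y
    simpa [qf] using this
  have hpos := h.pos
  calc (p ⬝ᵥ y) ^ 2 ≤ (p ⬝ᵥ p) * (y ⬝ᵥ y) := h2
    _ = (p ⬝ᵥ p) / s * (s * (y ⬝ᵥ y)) := by field_simp
    _ ≤ _ := mul_le_mul_of_nonneg_left h1 (div_nonneg (dot_self_nonneg p) h.pos.le)

end PD

/-- one telescoping step -/
lemma val_double {X : Matrix (Fin n) (Fin n) ℝ} (hX : PSD X) {s : ℝ} (hs : 0 < s) (q : Fin n → ℝ) :
    val (X + s • 1) q - val (X + (2 * s) • 1) q ≤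
      s * (((X + s • 1)⁻¹ *ᵥ q) ⬝ᵥ ((X + s • 1)⁻¹ *ᵥ q)) := by
  have h1 := hX.toPD hs
  have h2 := hX.toPD (s := 2 * s) (by linarith)
  set S := X + s • (1 : Matrix (Fin n) (Fin n) ℝ) with hS
  set S2 := X + (2 * s) • (1 : Matrix (Fin n) (Fin n) ℝ) with hS2
  set z := S⁻¹ *ᵥ q with hz
  have e : S2 = S + s • 1 := by rw [hS, hS2, two_mul, add_smul, add_assoc]
  have key : S2 *ᵥ (z - s • (S2⁻¹ *ᵥ z)) = q := by
    rw [mulVec_sub, mulVec_smul, h2.mul_inv, e, add_mulVec, hz, h1.mul_inv, smul_mulVec, one_mulVec]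
    simp
  have h3 : val S2 q = val S q - s * (q ⬝ᵥ (S2⁻¹ *ᵥ z)) := by
    rw [val, h2.inv_eq key, dotProduct_sub, dotProduct_smul, smul_eq_mul, val]
  have h4 : q ⬝ᵥ (S2⁻¹ *ᵥ z) = z ⬝ᵥ z - s * val S2 z := by
    rw [h2.inv_comm, h2.inv_eq key, dotProduct_sub, dotProduct_smul, smul_eq_mul, val]
  have := h2.val_nonneg z
  rw [h3, h4]
  nlinarith [mul_nonneg (mul_nonneg hs.le hs.le) this]

lemma val_telescope {X : Matrix (Fin n) (Fin n) ℝ} (hX : PSD X) {b : ℝ} (hb : 0 < b) (q : Fin n → ℝ)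
    (m : ℕ) (t : ℝ)
    (h : ∀ i < m, (b * 2 ^ i) * (((X + (b * 2 ^ i) • 1)⁻¹ *ᵥ q) ⬝ᵥ ((X + (b * 2 ^ i) • 1)⁻¹ *ᵥ q)) ≤ t) :
    val (X + b • 1) q ≤ m * t + val (X + (b * 2 ^ m) • 1) q := by
  induction m with
  | zero => simp
  | succ m ih =>
    have h1 := ih fun i hi => h i (by omega)
    have h2 := h m (by omega)
    have h3 := val_double hX (s := b * 2 ^ m) (by positivity) q
    have e : 2 * (b * 2 ^ m) = b * 2 ^ (m + 1) := by ring
    rw [e] at h3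
    push_cast
    linarith


/-- multiplicity vector of a list -/
noncomputable def cnt (L : List (Fin n)) : Fin n → ℝ := fun j => (L.count j : ℝ)

lemma cnt_append (L L' : List (Fin n)) : cnt (L ++ L') = cnt L + cnt L' := by
  ext j; simp [cnt]

lemma cnt_nil : cnt ([] : List (Fin n)) = 0 := by
  ext j; simp [cnt]

/-- dyadic block of a list -/
def blk (fr : List (Fin n)) (h c : ℕ) : List (Fin n) := (fr.drop (c * 2 ^ h)).take (2 ^ h)

lemma blk_append (fr e : List (Fin n)) (h c : ℕ) (hc : (c + 1) * 2 ^ h ≤ fr.length) :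
    blk (fr ++ e) h c = blk fr h c := by
  have : c * 2 ^ h + 2 ^ h ≤ fr.length := by linarith [add_mul c 1 (2 ^ h)]
  unfold blk
  rw [List.drop_append_of_le_length (le_trans (Nat.le_add_right _ _) this), List.take_append_of_le_length]
  rw [List.length_drop]; exact Nat.le_sub_of_add_le' this

/-- correction matrix -/
noncomputable def corr (H : ℕ) (fr : List (Fin n)) (X : Matrix (Fin n) (Fin n) ℝ) :
    Matrix (Fin n) (Fin n) ℝ :=
  ∑ h ∈ Finset.range H, ∑ c ∈ Finset.range (fr.length / 2 ^ h), cmp (cnt (blk fr h c)) X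

/-- dyadic piece in the decomposition of a prefix -/
noncomputable def piece (fr : List (Fin n)) (h : ℕ) : Fin n → ℝ :=
  if (fr.length / 2 ^ h) % 2 = 1 then cnt (blk fr h (fr.length / 2 ^ h - 1)) else 0

lemma piece_step (fr : List (Fin n)) (h : ℕ) :
    cnt (fr.take (2 ^ h * (fr.length / 2 ^ h))) =
      cnt (fr.take (2 ^ (h + 1) * (fr.length / 2 ^ (h + 1)))) + piece fr h := by
  have e : fr.length / 2 ^ (h + 1) = (fr.length / 2 ^ h) / 2 := by
    rw [pow_succ, Nat.div_div_eq_div_mul]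
  rw [e, piece]
  generalize fr.length / 2 ^ h = a
  split_ifs with ho
  · have h1 : 2 ^ h * a = 2 ^ (h + 1) * (a / 2) + 2 ^ h := by
      have : a = 2 * (a / 2) + 1 := by omega
      conv_lhs => rw [this]
      ring
    have h2 : (a - 1) * 2 ^ h = 2 ^ (h + 1) * (a / 2) := by
      have : a - 1 = 2 * (a / 2) := by omega
      rw [this]; ring
    rw [h1, List.take_add, cnt_append, blk, h2]
  · have h1 : 2 ^ h * a = 2 ^ (h + 1) * (a / 2) := by
      have : a = 2 * (a / 2) := by omega
      conv_lhs => rw [this]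
      ring
    rw [h1, add_zero]

lemma cnt_eq_sum (fr : List (Fin n)) (H : ℕ) (hH : fr.length < 2 ^ H) :
    cnt fr = ∑ h ∈ Finset.range H, piece fr h := by
  have key : ∀ m, cnt fr = ∑ h ∈ Finset.range m, piece fr h
      + cnt (fr.take (2 ^ m * (fr.length / 2 ^ m))) := by
    intro m
    induction m with
    | zero => simp
    | succ m ih => rw [Finset.sum_range_succ, ih, piece_step]; abel
  rw [key H, Nat.div_eq_of_lt hH]
  simp [cnt_nil]

lemma qf_piece_le (fr : List (Fin n)) (h : ℕ) {X : Matrix (Fin n) (Fin n) ℝ} (hX : PSD X) (y : Fin n → ℝ) :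
    qf X (piece fr h * y) ≤ ∑ c ∈ Finset.range (fr.length / 2 ^ h), qf (cmp (cnt (blk fr h c)) X) y := by
  unfold piece
  split_ifs with ho
  · rw [← qf_cmp]
    apply Finset.single_le_sum (f := fun c => qf (cmp (cnt (blk fr h c)) X) y)
    · intro i _; exact (hX.cmp _).nonneg y
    · rw [Finset.mem_range]
      generalize fr.length / 2 ^ h = a at *
      omega
  · rw [zero_mul]
    have : qf X 0 = 0 := by simp [qf]
    rw [this]
    exact Finset.sum_nonneg fun i _ => (hX.cmp _).nonneg y

lemma corr_psd (H : ℕ) (fr : List (Fin n)) {X : Matrix (Fin n) (Fin n) ℝ} (hX : PSD X) :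
    PSD (corr H fr X) :=
  PSD.sum _ _ fun _ _ => PSD.sum _ _ fun _ _ => hX.cmp _

lemma qf_unmask_le (H : ℕ) (fr : List (Fin n)) (hH : fr.length < 2 ^ H)
    {X : Matrix (Fin n) (Fin n) ℝ} (hX : PSD X) (y : Fin n → ℝ) :
    qf X ((1 - cnt fr) * y) ≤ (H + 1) * (qf X y + qf (corr H fr X) y) := by
  let v : ℕ → Fin n → ℝ := fun i => Nat.casesOn i y fun h => (-1 : ℝ) • (piece fr h * y)
  have e : (1 - cnt fr) * y = ∑ i ∈ Finset.range (H + 1), v i := by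
    rw [Finset.sum_range_succ', cnt_eq_sum fr H hH]
    simp only [v]
    rw [sub_mul, one_mul, Finset.sum_mul, ← Finset.smul_sum]
    simp [sub_eq_add_neg, add_comm]
  rw [e]
  refine (hX.qf_sum_le _ _).trans ?_
  rw [Finset.card_range]
  push_cast
  apply mul_le_mul_of_nonneg_left _ (by positivity)
  rw [Finset.sum_range_succ', corr, qf_sum]
  simp only [v, PSD.qf_smul_vec]
  rw [add_comm]
  refine add_le_add le_rfl (Finset.sum_le_sum fun h _ => ?_)
  rw [qf_sum]
  have := qf_piece_le fr h hX y
  linarith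

lemma cnt_le_one {L : List (Fin n)} (hL : L.Nodup) (j : Fin n) : cnt L j ≤ 1 := by
  have := List.nodup_iff_count_le_one.1 hL j
  simp only [cnt]; exact_mod_cast this

lemma cnt_nonneg (L : List (Fin n)) (j : Fin n) : 0 ≤ cnt L j := by simp [cnt]

lemma blk_sum (fr : List (Fin n)) (h m : ℕ) :
    ∑ c ∈ Finset.range m, cnt (blk fr h c) = cnt (fr.take (m * 2 ^ h)) := by
  induction m with
  | zero => simp [cnt_nil]
  | succ m ih => rw [Finset.sum_range_succ, ih, add_mul, one_mul, List.take_add, cnt_append, blk]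

lemma corr_diag (H : ℕ) {fr : List (Fin n)} (hfr : fr.Nodup) {X : Matrix (Fin n) (Fin n) ℝ}
    (hX : PSD X) (j : Fin n) : corr H fr X j j ≤ H * X j j := by
  have hXj : 0 ≤ X j j := by exact qf_single X j ▸ hX.nonneg _
  have key : ∀ h, ∑ c ∈ Finset.range (fr.length / 2 ^ h), cmp (cnt (blk fr h c)) X j j ≤ X j j := by
    intro h
    have h1 : ∀ c, cmp (cnt (blk fr h c)) X j j ≤ cnt (blk fr h c) j * X j j := by
      intro c
      have hn : (blk fr h c).Nodup :=
        hfr.sublist ((List.take_sublist _ _).trans (List.drop_sublist _ _))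
      have a1 := cnt_le_one hn j
      have a0 := cnt_nonneg (blk fr h c) j
      simp only [cmp, of_apply]
      nlinarith [mul_nonneg a0 hXj]
    refine (Finset.sum_le_sum fun c _ => h1 c).trans ?_
    rw [← Finset.sum_mul]
    have h2 := congrFun (blk_sum fr h (fr.length / 2 ^ h)) j
    rw [Finset.sum_apply] at h2
    rw [h2]
    have h3 := cnt_le_one (hfr.sublist (List.take_sublist (fr.length / 2 ^ h * 2 ^ h) fr)) j
    nlinarith
  simp only [corr, Matrix.sum_apply]
  refine (Finset.sum_le_sum fun h _ => key h).trans ?_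
  simp

lemma corr_mono (H : ℕ) (fr e : List (Fin n)) {X X' : Matrix (Fin n) (Fin n) ℝ} (hX' : PSD X')
    (hag : ∀ i ∈ fr, ∀ j, X' i j = X i j) : PSD (corr H (fr ++ e) X' - corr H fr X) := by
  rw [corr, corr, ← Finset.sum_sub_distrib]
  apply PSD.sum
  intro h _
  have hle : fr.length / 2 ^ h ≤ (fr ++ e).length / 2 ^ h :=
    Nat.div_le_div_right (by simp)
  rw [← Finset.sum_range_add_sum_Ico _ hle]
  have : ∑ c ∈ Finset.range (fr.length / 2 ^ h), cmp (cnt (blk (fr ++ e) h c)) X' =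
      ∑ c ∈ Finset.range (fr.length / 2 ^ h), cmp (cnt (blk fr h c)) X := by
    apply Finset.sum_congr rfl
    intro c hc
    rw [Finset.mem_range] at hc
    rw [blk_append]
    · ext i j
      simp only [cmp, of_apply]
      by_cases hi : i ∈ fr
      · rw [hag i hi]
      · have : i ∉ blk fr h c := fun h' => hi (List.mem_of_mem_drop (List.mem_of_mem_take h'))
        have : cnt (blk fr h c) i = 0 := by simp [cnt, List.count_eq_zero_of_not_mem this]
        rw [this]; ring
    · calc (c + 1) * 2 ^ h ≤ (fr.length / 2 ^ h) * 2 ^ h := Nat.mul_le_mul_right _ hc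
        _ ≤ _ := Nat.div_mul_le_self _ _
  rw [this, add_sub_cancel_left]
  exact PSD.sum _ _ fun _ _ => hX'.cmp _

/-- state of a single level -/
structure St (n : ℕ) where
  X : Matrix (Fin n) (Fin n) ℝ
  fr : List (Fin n)

/-- offline solution certificate for a list of queries -/
structure Prom {k : ℕ} (l : List (Fin n → ℝ)) (p : Fin k → Fin n → ℝ) : Prop where
  diag : ∀ j, ∑ a, p a j ^ 2 ≤ 1
  cov : ∀ q ∈ l, ∀ y, (q ⬝ᵥ y) ^ 2 ≤ ∑ a, (p a ⬝ᵥ y) ^ 2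

/-- static invariants -/
structure SI (b : ℝ) (B : Finset (Fin n)) (st : St n) : Prop where
  psd : PSD st.X
  nodup : st.fr.Nodup
  le2 : ∀ j, st.X j j ≤ 2 * b
  lt : ∀ j, j ∉ st.fr → st.X j j < b
  ge : ∀ j, j ∈ st.fr → b ≤ st.X j j
  supp : ∀ i, i ∉ B → ∀ j, st.X i j = 0

/-- indicator of unfrozen columns -/
noncomputable def act (fr : List (Fin n)) : Fin n → ℝ := fun j => if j ∈ fr then 0 else 1

/-- indicator of a finset -/
noncomputable def ind (J : Finset (Fin n)) : Fin n → ℝ := fun j => if j ∈ J then 1 else 0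

lemma act_eq {fr : List (Fin n)} (h : fr.Nodup) : act fr = 1 - cnt fr := by
  ext j
  simp only [act, cnt, Pi.sub_apply, Pi.one_apply]
  split_ifs with hj
  · simp [List.count_eq_one_of_mem h hj]
  · simp [List.count_eq_zero_of_not_mem hj]

noncomputable def Smat (st : St n) (s : ℝ) : Matrix (Fin n) (Fin n) ℝ := cmp (act st.fr) st.X + s • 1

noncomputable def Phi {k : ℕ} (b : ℝ) (m : ℕ) (st : St n) (p : Fin k → Fin n → ℝ) (J : Finset (Fin n)) : ℝ :=
  ∑ i ∈ Finset.range m, (b * 2 ^ i) * ∑ a, val (Smat st (b * 2 ^ i)) (act st.fr * (ind J * p a))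

noncomputable def Gm (b : ℝ) (H : ℕ) (st : St n) : Matrix (Fin n) (Fin n) ℝ :=
  b • 1 + st.X + corr H st.fr st.X

lemma SI.pd {b : ℝ} {B : Finset (Fin n)} {st : St n} (h : SI b B st) {s : ℝ} (hs : 0 < s) :
    PD (Smat st s) s := (h.psd.cmp _).toPD hs

lemma SI.inv_supp {b : ℝ} {B : Finset (Fin n)} {st : St n} (h : SI b B st) {s : ℝ} (hs : 0 < s)
    (p : Fin n → ℝ) (j : Fin n) (hj : j ∈ st.fr ∨ j ∉ B) (hp : p j = 0) :
    ((Smat st s)⁻¹ *ᵥ p) j = 0 := by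
  have h1 := congrFun ((h.pd hs).mul_inv p) j
  set z := (Smat st s)⁻¹ *ᵥ p
  rw [Smat, add_mulVec, cmp_mulVec, smul_mulVec, one_mulVec, hp] at h1
  simp only [Pi.add_apply, Pi.mul_apply, Pi.smul_apply, smul_eq_mul] at h1
  have h2 : act st.fr j * (st.X *ᵥ (act st.fr * z)) j = 0 := by
    rcases hj with hj | hj
    · simp [act, hj]
    · have : (st.X *ᵥ (act st.fr * z)) j = 0 := by
        simp [mulVec, dotProduct, h.supp j hj]
      rw [this, mul_zero]
  rw [h2, zero_add] at h1
  rcases mul_eq_zero.1 h1 with h3 | h3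
  · exact absurd h3 hs.ne'
  · exact h3

lemma act_sq (fr : List (Fin n)) (j : Fin n) : act fr j ^ 2 ≤ 1 := by
  simp only [act]; split_ifs <;> norm_num

/-- freezing decreases the value -/
lemma val_freeze {X : Matrix (Fin n) (Fin n) ℝ} (hX : PSD X) {s : ℝ} (hs : 0 < s)
    (fr e : List (Fin n)) (p : Fin n → ℝ) :
    val (Smat ⟨X, fr ++ e⟩ s) (act (fr ++ e) * p) ≤ val (Smat ⟨X, fr⟩ s) (act fr * p) := by
  have hd : ∀ y : Fin n → ℝ, act fr * (act (fr ++ e) * y) = act (fr ++ e) * y := by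
    intro y; ext j
    simp only [act, Pi.mul_apply, List.mem_append]
    by_cases h1 : j ∈ fr <;> simp [h1]
  have hd' : ∀ y : Fin n → ℝ, act (fr ++ e) * (act fr * y) = act (fr ++ e) * y := by
    intro y; ext j
    simp only [act, Pi.mul_apply, List.mem_append]
    by_cases h1 : j ∈ fr <;> simp [h1]
  apply PD.val_mono ((hX.cmp _).toPD hs) ((hX.cmp _).toPD hs) _ _ (act (fr ++ e)) (hd' p).symm
  intro y
  simp only [qf_add, qf_cmp, qf_smul, qf_one, hd]
  have := dot_self_mask_le (act (fr ++ e)) y (act_sq _)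
  nlinarith

lemma update_step (b : ℝ) (hb : 0 < b) (H m : ℕ) (θ : ℝ) (hθ : 0 ≤ θ) (B : Finset (Fin n)) (st : St n)
    (hS : SI b B st) (q : Fin n → ℝ) (i : ℕ) (hi : i < m)
    (hz : θ < (b * 2 ^ i) * (((Smat st (b * 2 ^ i))⁻¹ *ᵥ (act st.fr * (ind B * q))) ⬝ᵥ
      ((Smat st (b * 2 ^ i))⁻¹ *ᵥ (act st.fr * (ind B * q))))) :
    ∃ st' : St n, SI b B st' ∧ PSD (Gm b H st' - Gm b H st) ∧ st.fr <+: st'.fr ∧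
      st'.X.trace = st.X.trace + b ∧
      ∀ (k : ℕ) (p : Fin k → Fin n → ℝ) (l : List (Fin n → ℝ)), q ∈ l → Prom l p →
        ∀ J : Finset (Fin n), B ⊆ J → Phi b m st' p J ≤ Phi b m st p J - b * (θ / 2) := by
  classical
  set s := b * 2 ^ i with hs
  have hs0 : 0 < s := by positivity
  have hbs : b ≤ s := by
    rw [hs]; exact le_mul_of_one_le_right hb.le (one_le_pow₀ (by norm_num))
  set q' := act st.fr * (ind B * q) with hq'
  set z := (Smat st s)⁻¹ *ᵥ q' with hzdef
  have hzz : 0 < z ⬝ᵥ z := by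
    have := dot_self_nonneg z
    by_contra h
    have h0 : z ⬝ᵥ z = 0 := by linarith
    rw [h0] at hz; linarith
  set r := Real.sqrt (z ⬝ᵥ z) with hr
  have hr0 : 0 < r := Real.sqrt_pos.2 hzz
  have hr2 : r ^ 2 = z ⬝ᵥ z := Real.sq_sqrt hzz.le
  set u := r⁻¹ • z with hu
  have huu : u ⬝ᵥ u = 1 := by
    rw [hu, smul_dotProduct, dotProduct_smul, smul_eq_mul, smul_eq_mul, ← hr2]; field_simp
  have hq'0 : ∀ j, (j ∈ st.fr ∨ j ∉ B) → q' j = 0 := by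
    intro j hj
    rcases hj with hj | hj <;> simp [hq', act, ind, hj]
  have hz0 : ∀ j, (j ∈ st.fr ∨ j ∉ B) → z j = 0 := fun j hj => hS.inv_supp hs0 q' j hj (hq'0 j hj)
  have hu0 : ∀ j, (j ∈ st.fr ∨ j ∉ B) → u j = 0 := fun j hj => by simp [hu, hz0 j hj]
  have huj : ∀ j, u j * u j ≤ 1 := by
    intro j
    rw [← huu]
    exact Finset.single_le_sum (f := fun j => u j * u j) (fun j _ => mul_self_nonneg _) (Finset.mem_univ j)
  set X' := st.X + b • vecMulVec u u with hX'
  have hX'ap : ∀ i j, X' i j = st.X i j + b * (u i * u j) := by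
    intro i j; simp [hX', vecMulVec]
  have hX'psd : PSD X' := hS.psd.add ((PSD.vmv u).smul hb.le)
  set e := (Finset.univ.filter fun j => j ∉ st.fr ∧ b ≤ X' j j).toList with he
  have hmem : ∀ j, j ∈ e ↔ j ∉ st.fr ∧ b ≤ X' j j := by intro j; simp [he]
  have hau : act st.fr * u = u := by
    ext j
    by_cases hj : j ∈ st.fr
    · simp [act, hj, hu0 j (Or.inl hj)]
    · simp [act, hj]
  have hSm : ∀ t, Smat ⟨X', st.fr⟩ t = Smat st t + b • vecMulVec u u := by
    intro t
    have : cmp (act st.fr) X' = cmp (act st.fr) st.X + b • vecMulVec u u := by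
      ext i j
      have h1 := congrFun hau i
      have h2 := congrFun hau j
      simp only [Pi.mul_apply] at h1 h2
      simp only [cmp, of_apply, Matrix.add_apply, Matrix.smul_apply, vecMulVec_apply, smul_eq_mul, hX'ap]
      conv_rhs => rw [← h1, ← h2]
      ring
    simp only [Smat, this]; abel
  refine ⟨⟨X', st.fr ++ e⟩, ⟨hX'psd, ?_, ?_, ?_, ?_, ?_⟩, ?_, List.prefix_append _ _, ?_, ?_⟩
  · refine hS.nodup.append (Finset.nodup_toList _) ?_
    intro j hj hje
    exact ((hmem j).1 hje).1 hj
  · intro j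
    show X' j j ≤ 2 * b
    rw [hX'ap]
    by_cases hj : j ∈ st.fr
    · rw [hu0 j (Or.inl hj)]; have := hS.le2 j; linarith
    · have := hS.lt j hj; nlinarith [huj j]
  · intro j hj
    simp only [List.mem_append, not_or, hmem, not_and, not_le] at hj
    exact hj.2 hj.1
  · intro j hj
    simp only [List.mem_append, hmem] at hj
    rcases hj with hj | hj
    · show b ≤ X' j j
      rw [hX'ap, hu0 j (Or.inl hj)]; have := hS.ge j hj; linarith
    · exact hj.2
  · intro i hi j
    show X' i j = 0
    rw [hX'ap, hu0 i (Or.inr hi), hS.supp i hi]; ring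
  · have h1 : PSD (corr H (st.fr ++ e) X' - corr H st.fr st.X) := by
      apply corr_mono H _ _ hX'psd
      intro i hi j
      rw [hX'ap, hu0 i (Or.inl hi)]; ring
    have h2 : Gm b H ⟨X', st.fr ++ e⟩ - Gm b H st = b • vecMulVec u u +
        (corr H (st.fr ++ e) X' - corr H st.fr st.X) := by
      simp only [Gm, hX']; abel
    rw [h2]
    exact ((PSD.vmv u).smul hb.le).add h1
  · show X'.trace = _
    simp only [trace, diag_apply, hX'ap, Finset.sum_add_distrib, ← Finset.mul_sum]
    change _ + b * (u ⬝ᵥ u) = _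
    rw [huu, mul_one]
  · intro k p l hql hp J hJ
    have hpd : ∀ t, 0 < t → PD (Smat st t) t := fun t ht => hS.pd ht
    have hpd' : ∀ t, 0 < t → PD (Smat st t + b • vecMulVec u u) t := fun t ht => by
      rw [← hSm]; exact (hX'psd.cmp _).toPD ht
    have step1 : ∀ t, 0 < t → ∀ a, val (Smat ⟨X', st.fr ++ e⟩ t) (act (st.fr ++ e) * (ind J * p a)) ≤
        val (Smat st t) (act st.fr * (ind J * p a)) -
          b * ((act st.fr * (ind J * p a)) ⬝ᵥ ((Smat st t)⁻¹ *ᵥ u)) ^ 2 / (1 + b * val (Smat st t) u) := by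
      intro t ht a
      refine (val_freeze hX'psd ht st.fr e _).trans ?_
      rw [hSm, (hpd t ht).update b hb.le u _ (hpd' t ht)]
    have step2 : ∀ t, 0 < t → ∀ a, val (Smat ⟨X', st.fr ++ e⟩ t) (act (st.fr ++ e) * (ind J * p a)) ≤
        val (Smat st t) (act st.fr * (ind J * p a)) := by
      intro t ht a
      refine (step1 t ht a).trans (sub_le_self _ ?_)
      have := (hpd t ht).val_nonneg u
      positivity
    -- main gain
    have hw0 : ∀ j, (j ∈ st.fr ∨ j ∉ B) → ((Smat st s)⁻¹ *ᵥ u) j = 0 :=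
      fun j hj => hS.inv_supp hs0 u j hj (hu0 j hj)
    set w := (Smat st s)⁻¹ *ᵥ u with hw
    have hJw : ∀ v : Fin n → ℝ, (act st.fr * (ind J * v)) ⬝ᵥ w = v ⬝ᵥ w := by
      intro v
      rw [dot_mul, dot_mul]
      congr 1
      ext j
      by_cases hj : j ∈ st.fr ∨ j ∉ B
      · simp [hw0 j hj]
      · push Not at hj
        simp [act, ind, hj.1, hJ hj.2]
    have hBw : q' ⬝ᵥ w = q ⬝ᵥ w := by
      rw [hq', dot_mul, dot_mul]
      congr 1
      ext j
      by_cases hj : j ∈ st.fr ∨ j ∉ B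
      · simp [hw0 j hj]
      · push Not at hj
        simp [act, ind, hj.1, hj.2]
    have hqw : (q ⬝ᵥ w) ^ 2 = z ⬝ᵥ z := by
      rw [← hBw, hw, (hpd s hs0).inv_comm, ← hzdef, hu, smul_dotProduct, smul_eq_mul, mul_pow, ← hr2]
      field_simp
    have hvu : val (Smat st s) u ≤ 1 / s := by
      have := (hpd s hs0).val_le_div u
      rwa [huu] at this
    have hvu0 := (hpd s hs0).val_nonneg u
    have hden : 1 + b * val (Smat st s) u ≤ 2 := by
      have : b * val (Smat st s) u ≤ s * (1 / s) := by gcongr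
      rw [mul_one_div_cancel hs0.ne'] at this
      linarith
    have hgain : ∑ a, val (Smat ⟨X', st.fr ++ e⟩ s) (act (st.fr ++ e) * (ind J * p a)) ≤
        ∑ a, val (Smat st s) (act st.fr * (ind J * p a)) - b * (z ⬝ᵥ z) / 2 := by
      refine (Finset.sum_le_sum fun a _ => step1 s hs0 a).trans ?_
      rw [Finset.sum_sub_distrib]
      apply sub_le_sub_left
      have h1 : z ⬝ᵥ z ≤ ∑ a, (p a ⬝ᵥ w) ^ 2 := by
        rw [← hqw]; exact hp.cov q hql w
      calc b * (z ⬝ᵥ z) / 2 ≤ b * (∑ a, (p a ⬝ᵥ w) ^ 2) / (1 + b * val (Smat st s) u) := by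
            apply div_le_div₀ _ _ _ hden
            · exact mul_nonneg hb.le (Finset.sum_nonneg fun _ _ => sq_nonneg _)
            · exact mul_le_mul_of_nonneg_left h1 hb.le
            · positivity
        _ = _ := by
            rw [Finset.mul_sum, Finset.sum_div]
            apply Finset.sum_congr rfl
            intro a _
            rw [hJw]
    simp only [Phi]
    have him : i ∈ Finset.range m := Finset.mem_range.2 hi
    rw [← Finset.add_sum_erase _ _ him, ← Finset.add_sum_erase (Finset.range m) _ him, ← hs]
    have h3 : ∑ x ∈ (Finset.range m).erase i, b * 2 ^ x * ∑ a, val (Smat ⟨X', st.fr ++ e⟩ (b * 2 ^ x)) (act (st.fr ++ e) * (ind J * p a)) ≤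
        ∑ x ∈ (Finset.range m).erase i, b * 2 ^ x * ∑ a, val (Smat st (b * 2 ^ x)) (act st.fr * (ind J * p a)) := by
      apply Finset.sum_le_sum
      intro x _
      apply mul_le_mul_of_nonneg_left _ (by positivity)
      exact Finset.sum_le_sum fun a _ => step2 _ (by positivity) a
    have h4 := mul_le_mul_of_nonneg_left hgain hs0.le
    have h5 : b * (θ / 2) ≤ s * (b * (z ⬝ᵥ z) / 2) := by nlinarith
    rw [mul_sub] at h4
    linarith

/-- dynamic invariant -/
def DI (b : ℝ) (m : ℕ) (θ : ℝ) (l : List (Fin n → ℝ)) (B : Finset (Fin n)) (st : St n) : Prop :=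
  ∀ (k : ℕ) (p : Fin k → Fin n → ℝ), Prom l p → ∀ J : Finset (Fin n), B ⊆ J →
    Phi b m st p J + θ / 2 * st.X.trace ≤ m * J.card

lemma Prom.mono {k : ℕ} {l : List (Fin n → ℝ)} {q : Fin n → ℝ} {p : Fin k → Fin n → ℝ}
    (h : Prom (l ++ [q]) p) : Prom l p := ⟨h.diag, fun q hq => h.cov q (by simp [hq])⟩

lemma SI.mono {b : ℝ} {B B' : Finset (Fin n)} {st : St n} (h : SI b B st) (hB : B ⊆ B') : SI b B' st :=
  ⟨h.psd, h.nodup, h.le2, h.lt, h.ge, fun i hi => h.supp i fun h' => hi (hB h')⟩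

lemma DI.mono {b : ℝ} {m : ℕ} {θ : ℝ} {l : List (Fin n → ℝ)} {q : Fin n → ℝ} {B B' : Finset (Fin n)}
    {st : St n} (h : DI b m θ l B st) (hB : B ⊆ B') : DI b m θ (l ++ [q]) B' st :=
  fun k p hp J hJ => h k p hp.mono J (hB.trans hJ)

lemma SI.Phi_nonneg {b : ℝ} (hb : 0 < b) {B : Finset (Fin n)} {st : St n} (h : SI b B st) {k : ℕ} (m : ℕ)
    (p : Fin k → Fin n → ℝ) (J : Finset (Fin n)) : 0 ≤ Phi b m st p J := by
  apply Finset.sum_nonneg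
  intro i _
  apply mul_nonneg (by positivity)
  exact Finset.sum_nonneg fun a _ => (h.pd (by positivity)).val_nonneg _

lemma init_SI {b : ℝ} (hb : 0 < b) (B : Finset (Fin n)) : SI b B ⟨0, []⟩ :=
  ⟨PSD.zero, List.nodup_nil, fun j => by simp; linarith, fun j _ => by simpa using hb,
    fun j hj => by simp at hj, fun i _ j => by simp⟩

lemma init_DI {b : ℝ} (hb : 0 < b) (m : ℕ) (θ : ℝ) (l : List (Fin n → ℝ)) (B : Finset (Fin n)) :
    DI b m θ l B ⟨0, []⟩ := by
  intro k p hp J _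
  have hSI := init_SI hb B
  simp only [trace_zero, mul_zero, add_zero]
  have h1 : ∀ i ∈ Finset.range m, (b * 2 ^ i) * ∑ a, val (Smat (⟨0, []⟩ : St n) (b * 2 ^ i))
      (act [] * (ind J * p a)) ≤ J.card := by
    intro i _
    have hs : (0 : ℝ) < b * 2 ^ i := by positivity
    have h2 : ∀ a, val (Smat (⟨0, []⟩ : St n) (b * 2 ^ i)) (act [] * (ind J * p a)) ≤
        (∑ j ∈ J, p a j ^ 2) / (b * 2 ^ i) := by
      intro a
      refine ((hSI.pd hs).val_le_div _).trans (le_of_eq ?_)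
      congr 1
      simp only [dotProduct, act, ind, Pi.mul_apply, List.not_mem_nil, if_false, one_mul, ite_mul,
        zero_mul, mul_ite, mul_zero]
      rw [← Finset.sum_filter]
      simp only [Finset.filter_univ_mem]
      apply Finset.sum_congr rfl
      intro j hj
      simp [hj, sq]
    calc _ ≤ (b * 2 ^ i) * ∑ a, (∑ j ∈ J, p a j ^ 2) / (b * 2 ^ i) := by
            apply mul_le_mul_of_nonneg_left _ hs.le
            exact Finset.sum_le_sum fun a _ => h2 a
      _ = ∑ j ∈ J, ∑ a, p a j ^ 2 := by
            rw [← Finset.sum_div, mul_div_cancel₀ _ hs.ne', Finset.sum_comm]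
      _ ≤ ∑ j ∈ J, 1 := Finset.sum_le_sum fun j _ => hp.diag j
      _ = J.card := by simp
  refine (Finset.sum_le_sum h1).trans (le_of_eq ?_)
  simp

/-- all scales are fine for the query `q` -/
def Good (b : ℝ) (m : ℕ) (θ : ℝ) (B : Finset (Fin n)) (q : Fin n → ℝ) (st : St n) : Prop :=
  ∀ i < m, (b * 2 ^ i) * (((Smat st (b * 2 ^ i))⁻¹ *ᵥ (act st.fr * (ind B * q))) ⬝ᵥ
      ((Smat st (b * 2 ^ i))⁻¹ *ᵥ (act st.fr * (ind B * q)))) ≤ θ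

lemma covered {b : ℝ} (hb : 0 < b) {H m : ℕ} {θ : ℝ} (hθ : 0 < θ) (hH : n < 2 ^ H) (hm : (n : ℝ) ≤ b * 2 ^ m)
    {B : Finset (Fin n)} {q : Fin n → ℝ} {st : St n} (hS : SI b B st) (hG : Good b m θ B q st)
    (hq : ∀ j, q j ^ 2 ≤ 1) (y : Fin n → ℝ) :
    ((act st.fr * (ind B * q)) ⬝ᵥ y) ^ 2 ≤ (m * θ + 1) * (H + 1) * qf (Gm b H st) y := by
  have hlen : st.fr.length < 2 ^ H := by
    refine lt_of_le_of_lt ?_ hH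
    simpa using hS.nodup.length_le_card
  have h1 := (hS.pd hb).sq_le (act st.fr * (ind B * q)) y
  have h2 := val_telescope (hS.psd.cmp (act st.fr)) hb (act st.fr * (ind B * q)) m θ hG
  have h3 := (hS.pd (s := b * 2 ^ m) (by positivity)).val_le_div (act st.fr * (ind B * q))
  have h4 : (act st.fr * (ind B * q)) ⬝ᵥ (act st.fr * (ind B * q)) ≤ n := by
    calc _ ≤ ∑ j : Fin n, (1 : ℝ) := by
          apply Finset.sum_le_sum
          intro j _
          have := hq j
          simp only [act, ind, Pi.mul_apply]
          split_ifs <;> nlinarith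
      _ = n := by simp
  have h5 : val (Smat st (b * 2 ^ m)) (act st.fr * (ind B * q)) ≤ 1 := by
    refine h3.trans ?_
    rw [div_le_one (by positivity)]
    linarith
  have h6 : val (Smat st b) (act st.fr * (ind B * q)) ≤ m * θ + 1 := by
    refine h2.trans ?_
    have : val (cmp (act st.fr) st.X + (b * 2 ^ m) • 1) (act st.fr * (ind B * q)) ≤ 1 := h5
    linarith
  have h7 : qf (Smat st b) y ≤ (H + 1) * qf (Gm b H st) y := by
    have e := qf_unmask_le H st.fr hlen hS.psd y
    rw [← act_eq hS.nodup] at e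
    simp only [Smat, Gm, qf_add, qf_cmp, qf_smul, qf_one]
    have := dot_self_nonneg y
    have hH0 : (0 : ℝ) ≤ H := by positivity
    nlinarith [mul_nonneg hH0 (mul_nonneg hb.le this)]
  have h8 := (hS.pd hb).psd.nonneg y
  calc _ ≤ _ := h1
    _ ≤ (m * θ + 1) * qf (Smat st b) y := mul_le_mul_of_nonneg_right h6 h8
    _ ≤ (m * θ + 1) * ((H + 1) * qf (Gm b H st) y) := mul_le_mul_of_nonneg_left h7 (by positivity)
    _ = _ := by ring

lemma loop (b : ℝ) (hb : 0 < b) (H m : ℕ) (θ : ℝ) (hθ : 0 < θ) (B : Finset (Fin n))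
    (l : List (Fin n → ℝ)) (q : Fin n → ℝ) (hql : q ∈ l) (hP : ∃ (k : ℕ) (p : Fin k → Fin n → ℝ), Prom l p)
    (r : ℕ) : ∀ st : St n, SI b B st → DI b m θ l B st → 2 * m * B.card / θ - st.X.trace < r * b →
    ∃ st' : St n, SI b B st' ∧ DI b m θ l B st' ∧ PSD (Gm b H st' - Gm b H st) ∧ st.fr <+: st'.fr ∧
      Good b m θ B q st' := by
  induction r with
  | zero =>
    intro st hS hD hr
    obtain ⟨k, p, hp⟩ := hP
    have h1 := hD k p hp B (Finset.Subset.refl _)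
    have h2 := hS.Phi_nonneg hb m p B
    exfalso
    have h3 : 2 * m * B.card / θ < st.X.trace := by simp at hr; linarith
    rw [div_lt_iff₀ hθ] at h3
    nlinarith
  | succ r ih =>
    intro st hS hD hr
    by_cases hG : Good b m θ B q st
    · exact ⟨st, hS, hD, by rw [sub_self]; exact PSD.zero, List.prefix_refl _, hG⟩
    · unfold Good at hG
      push Not at hG
      obtain ⟨i, hi, hz⟩ := hG
      obtain ⟨st1, a1, a2, a3, a4, a5⟩ := update_step b hb H m θ hθ.le B st hS q i hi hz
      have hD1 : DI b m θ l B st1 := by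
        intro k p hp J hJ
        have := hD k p hp J hJ
        have := a5 k p l hql hp J hJ
        rw [a4]; linarith
      obtain ⟨st2, b1, b2, b3, b4, b5⟩ := ih st1 a1 hD1 (by rw [a4]; push_cast at hr; linarith)
      refine ⟨st2, b1, b2, ?_, a3.trans b4, b5⟩
      have := b3.add a2
      rwa [sub_add_sub_cancel] at this

lemma Prom.entry {k : ℕ} {l : List (Fin n → ℝ)} {p : Fin k → Fin n → ℝ} (h : Prom l p)
    {q : Fin n → ℝ} (hq : q ∈ l) (j : Fin n) : q j ^ 2 ≤ 1 := by
  have := h.cov q hq (Pi.single j 1)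
  simp only [dotProduct_single_one] at this
  exact this.trans (h.diag j)

lemma level (b : ℝ) (hb : 0 < b) (H m : ℕ) (hm0 : 0 < m) (hH : n < 2 ^ H)
    (hm : (n : ℝ) ≤ b * 2 ^ m) (B : List (Fin n → ℝ) → Finset (Fin n)) (hB : ∀ l q, B l ⊆ B (l ++ [q])) :
    ∃ (G : List (Fin n → ℝ) → Matrix (Fin n) (Fin n) ℝ) (O : List (Fin n → ℝ) → Finset (Fin n)),
      (∀ l, PSD (G l)) ∧ (∀ l q, PSD (G (l ++ [q]) - G l)) ∧
      (∀ l j, G l j j ≤ b * (2 * H + 3)) ∧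
      (∀ l, O l ⊆ B l) ∧ (∀ l q, O l ⊆ O (l ++ [q])) ∧
      (∀ l, (∃ (k : ℕ) (p : Fin k → Fin n → ℝ), Prom l p) →
        2 * (O l).card ≤ (B l).card) ∧
      (∀ l q, (∃ (k : ℕ) (p : Fin k → Fin n → ℝ), Prom (l ++ [q]) p) → ∀ y,
        ((ind (B (l ++ [q]) \ O (l ++ [q])) * q) ⬝ᵥ y) ^ 2 ≤
          (m * (4 * m / b) + 1) * (H + 1) * qf (G (l ++ [q])) y) := by
  classical
  set θ : ℝ := 4 * m / b with hθd
  have hm0' : (0 : ℝ) < m := by exact_mod_cast hm0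
  have hθ : 0 < θ := by positivity
  have hbθ : θ * b = 4 * m := by rw [hθd]; field_simp
  have hnext : ∀ (l : List (Fin n → ℝ)) (q : Fin n → ℝ) (st : {st : St n // SI b (B l) st ∧ DI b m θ l (B l) st}),
      ∃ st' : {st : St n // SI b (B (l ++ [q])) st ∧ DI b m θ (l ++ [q]) (B (l ++ [q])) st},
        PSD (Gm b H st'.1 - Gm b H st.1) ∧ st.1.fr <+: st'.1.fr ∧
        ((∃ (k : ℕ) (p : Fin k → Fin n → ℝ), Prom (l ++ [q]) p) → Good b m θ (B (l ++ [q])) q st'.1) := by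
    intro l q ⟨st, hS, hD⟩
    have hS' := hS.mono (hB l q)
    have hD' : DI b m θ (l ++ [q]) (B (l ++ [q])) st := hD.mono (hB l q)
    by_cases hP : ∃ (k : ℕ) (p : Fin k → Fin n → ℝ), Prom (l ++ [q]) p
    · obtain ⟨r, hr⟩ := exists_nat_gt ((2 * m * (B (l ++ [q])).card / θ - st.X.trace) / b)
      rw [div_lt_iff₀ hb] at hr
      obtain ⟨st', c1, c2, c3, c4, c5⟩ := loop b hb H m θ hθ (B (l ++ [q])) (l ++ [q]) q (by simp) hP r st hS' hD' hr
      exact ⟨⟨st', c1, c2⟩, c3, c4, fun _ => c5⟩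
    · exact ⟨⟨st, hS', hD'⟩, by rw [sub_self]; exact PSD.zero, List.prefix_refl _, fun h => absurd h hP⟩
  choose nx hnx1 hnx2 hnx3 using hnext
  let F : ∀ l : List (Fin n → ℝ), {st : St n // SI b (B l) st ∧ DI b m θ l (B l) st} := fun l =>
    List.reverseRecOn l ⟨⟨0, []⟩, init_SI hb _, init_DI hb _ _ _ _⟩ (fun l q st => nx l q st)
  have hF : ∀ l q, F (l ++ [q]) = nx l q (F l) := by
    intro l q
    simp only [F, List.reverseRecOn_concat]
  have hsub : ∀ l, (F l).1.fr.toFinset ⊆ B l := by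
    intro l j hj
    rw [List.mem_toFinset] at hj
    by_contra hjB
    have h1 := (F l).2.1.ge j hj
    rw [(F l).2.1.supp j hjB j] at h1
    linarith
  refine ⟨fun l => Gm b H (F l).1, fun l => (F l).1.fr.toFinset, ?_, ?_, ?_, hsub, ?_, ?_, ?_⟩
  · intro l
    exact ((PSD.one.smul hb.le).add (F l).2.1.psd).add (corr_psd _ _ (F l).2.1.psd)
  · intro l q
    simp only [hF]; exact hnx1 _ _ _
  · intro l j
    have h1 := corr_diag H (F l).2.1.nodup (F l).2.1.psd j
    have h2 := (F l).2.1.le2 j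
    have hH0 : (0 : ℝ) ≤ H := by positivity
    simp only [Gm, Matrix.add_apply, Matrix.smul_apply, one_apply_eq, smul_eq_mul]
    nlinarith [mul_le_mul_of_nonneg_left h2 hH0]
  · intro l q j hj
    simp only [hF, List.mem_toFinset] at hj ⊢
    exact (hnx2 l q (F l)).subset hj
  · rintro l ⟨k, p, hp⟩
    have hS := (F l).2.1
    have h1 := (F l).2.2 k p hp (B l) (Finset.Subset.refl _)
    have h2 := hS.Phi_nonneg hb m p (B l)
    have h3 : ((F l).1.fr.toFinset.card : ℝ) * b ≤ (F l).1.X.trace := by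
      calc ((F l).1.fr.toFinset.card : ℝ) * b = ∑ j ∈ (F l).1.fr.toFinset, b := by simp
        _ ≤ ∑ j ∈ (F l).1.fr.toFinset, (F l).1.X j j :=
            Finset.sum_le_sum fun j hj => hS.ge j (List.mem_toFinset.1 hj)
        _ ≤ ∑ j, (F l).1.X j j := by
            apply Finset.sum_le_sum_of_subset_of_nonneg (Finset.subset_univ _)
            intro j _ _
            exact qf_single (F l).1.X j ▸ hS.psd.nonneg _
    have h4 : θ / 2 * (((F l).1.fr.toFinset.card : ℝ) * b) ≤ m * (B l).card :=
      (mul_le_mul_of_nonneg_left h3 (by positivity)).trans (by linarith)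
    have h5 : θ / 2 * (((F l).1.fr.toFinset.card : ℝ) * b) = m * (2 * ((F l).1.fr.toFinset.card : ℝ)) := by
      linear_combination (((F l).1.fr.toFinset.card : ℝ) / 2) * hbθ
    rw [h5] at h4
    have h6 := le_of_mul_le_mul_left h4 hm0'
    exact_mod_cast h6
  · rintro l q ⟨k, p, hp⟩ y
    have hS := (F (l ++ [q])).2.1
    have hG : Good b m θ (B (l ++ [q])) q (F (l ++ [q])).1 := by
      rw [hF]; exact hnx3 l q (F l) ⟨k, p, hp⟩
    have h1 := covered hb hθ hH hm hS hG (fun j => hp.entry (by simp) j) y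
    have e : ind (B (l ++ [q]) \ (F (l ++ [q])).1.fr.toFinset) * q =
        act (F (l ++ [q])).1.fr * (ind (B (l ++ [q])) * q) := by
      ext j
      simp only [ind, act, Pi.mul_apply, Finset.mem_sdiff, List.mem_toFinset]
      by_cases h1 : j ∈ B (l ++ [q]) <;> by_cases h2 : j ∈ (F (l ++ [q])).1.fr <;> simp [h1, h2]
    rw [e]; exact h1

lemma fixed (n : ℕ) :
    ∃ A : List (Fin n → ℝ) → Matrix (Fin n) (Fin n) ℝ,
      (∀ l, PSD (A l)) ∧ (∀ l q, PSD (A (l ++ [q]) - A l)) ∧ (∀ l j, A l j j ≤ 1) ∧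
      (∀ l q, (∃ (k : ℕ) (p : Fin k → Fin n → ℝ), Prom (l ++ [q]) p) → ∀ y,
        (q ⬝ᵥ y) ^ 2 ≤ 1442 * ((Nat.log 2 n + 1 : ℕ) : ℝ) ^ 6 * qf (A (l ++ [q])) y) := by
  classical
  set H : ℕ := Nat.log 2 n + 1 with hHd
  have hH : n < 2 ^ H := Nat.lt_pow_succ_log_self (by norm_num) n
  have hH1 : 1 ≤ H := by omega
  have hH1' : (1 : ℝ) ≤ H := by exact_mod_cast hH1
  have hH0' : (0 : ℝ) < H := by linarith
  set b : ℝ := 1 / (5 * (H : ℝ) ^ 2) with hbd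
  have hb : 0 < b := by positivity
  have hbH : b * (5 * (H : ℝ) ^ 2) = 1 := by rw [hbd]; field_simp
  set m : ℕ := 3 * H + 3 with hmd
  have hm0 : 0 < m := by omega
  have hm : (n : ℝ) ≤ b * 2 ^ m := by
    have h1 : (n : ℝ) ≤ 2 ^ H := by exact_mod_cast hH.le
    have h2 : (H : ℝ) ≤ 2 ^ H := by exact_mod_cast (Nat.lt_two_pow_self (n := H)).le
    have h3 : (2 : ℝ) ^ m = 8 * ((2 : ℝ) ^ H) ^ 3 := by
      rw [hmd, pow_add, mul_comm 3 H, pow_mul]; ring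
    rw [h3, hbd, one_div, inv_mul_eq_div, le_div_iff₀ (by positivity)]
    have h4 : (H : ℝ) ^ 2 ≤ (2 ^ H) ^ 2 := by gcongr
    have h5 : (n : ℝ) * (H : ℝ) ^ 2 ≤ 2 ^ H * (2 ^ H) ^ 2 := by gcongr
    have h6 : (0 : ℝ) ≤ ((2 : ℝ) ^ H) ^ 3 := by positivity
    nlinarith
  choose G O hG1 hG2 hG3 hO1 hO2 hO3 hG4 using fun (B : {B : List (Fin n → ℝ) → Finset (Fin n) // ∀ l q, B l ⊆ B (l ++ [q])}) =>
    level b hb H m hm0 hH hm B.1 B.2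
  let BB : ℕ → {B : List (Fin n → ℝ) → Finset (Fin n) // ∀ l q, B l ⊆ B (l ++ [q])} := fun i =>
    Nat.rec ⟨fun _ => Finset.univ, fun _ _ => Finset.Subset.refl _⟩ (fun _ B => ⟨O B, hO2 B⟩) i
  have hBB0 : ∀ l, (BB 0).1 l = Finset.univ := fun l => rfl
  have hBBs : ∀ i l, (BB (i + 1)).1 l = O (BB i) l := fun i l => rfl
  have hcard : ∀ l, (∃ (k : ℕ) (p : Fin k → Fin n → ℝ), Prom l p) → ∀ i, 2 ^ i * ((BB i).1 l).card ≤ n := by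
    intro l hl i
    induction i with
    | zero => simp [hBB0]
    | succ i ih =>
      have := hO3 (BB i) l hl
      rw [hBBs, pow_succ, mul_assoc]
      exact (Nat.mul_le_mul_left _ this).trans ih
  have hempty : ∀ l, (∃ (k : ℕ) (p : Fin k → Fin n → ℝ), Prom l p) → (BB H).1 l = ∅ := by
    intro l hl
    have h1 := hcard l hl H
    rw [← Finset.card_eq_zero]
    by_contra h0
    have : 1 ≤ ((BB H).1 l).card := Nat.one_le_iff_ne_zero.2 h0
    have := Nat.mul_le_mul_left (2 ^ H) this
    omega
  refine ⟨fun l => ∑ i ∈ Finset.range H, G (BB i) l, ?_, ?_, ?_, ?_⟩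
  · intro l; exact PSD.sum _ _ fun i _ => hG1 _ _
  · intro l q
    rw [← Finset.sum_sub_distrib]
    exact PSD.sum _ _ fun i _ => hG2 _ _ _
  · intro l j
    beta_reduce
    rw [Matrix.sum_apply]
    calc ∑ i ∈ Finset.range H, G (BB i) l j j ≤ ∑ i ∈ Finset.range H, b * (2 * H + 3) :=
          Finset.sum_le_sum fun i _ => hG3 _ _ _
      _ = b * (H * (2 * H + 3)) := by rw [Finset.sum_const, Finset.card_range, nsmul_eq_mul]; ring
      _ ≤ b * (5 * (H : ℝ) ^ 2) := by
          apply mul_le_mul_of_nonneg_left _ hb.le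
          nlinarith
      _ = 1 := hbH
  · intro l q hP y
    have hdec : ∀ r, ∑ i ∈ Finset.range r, (ind ((BB i).1 (l ++ [q]) \ (BB (i + 1)).1 (l ++ [q])) * q) =
        q - ind ((BB r).1 (l ++ [q])) * q := by
      intro r
      induction r with
      | zero =>
        ext j
        simp [hBB0, ind]
      | succ r ih =>
        rw [Finset.sum_range_succ, ih]
        ext j
        have hs := hO1 (BB r) (l ++ [q])
        rw [← hBBs] at hs
        have hs' := @hs j
        simp only [ind, Pi.add_apply, Pi.sub_apply, Pi.mul_apply, Finset.mem_sdiff]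
        by_cases h1 : j ∈ (BB (r + 1)).1 (l ++ [q])
        · have h2 := hs' h1
          simp [h1, h2]
        · by_cases h2 : j ∈ (BB r).1 (l ++ [q]) <;> simp [h1, h2]
    have hq : q ⬝ᵥ y = ∑ i ∈ Finset.range H,
        (ind ((BB i).1 (l ++ [q]) \ (BB (i + 1)).1 (l ++ [q])) * q) ⬝ᵥ y := by
      rw [← sum_dotProduct, hdec, hempty _ hP]
      congr 1
      ext j; simp [ind]
    rw [hq, qf_sum]
    have hmle : (m : ℝ) ≤ 6 * H := by rw [hmd]; push_cast; linarith
    have hc : (H : ℝ) * ((m * (4 * m / b) + 1) * (H + 1)) ≤ 1442 * (H : ℝ) ^ 6 := by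
      have e1 : (m : ℝ) * (4 * m / b) = 20 * (m : ℝ) ^ 2 * (H : ℝ) ^ 2 := by
        rw [hbd]; field_simp; ring
      rw [e1]
      have e2 : (m : ℝ) ^ 2 ≤ (6 * H) ^ 2 := by gcongr
      have e3 : 20 * (m : ℝ) ^ 2 * (H : ℝ) ^ 2 + 1 ≤ 721 * (H : ℝ) ^ 4 := by
        have : (1 : ℝ) ≤ (H : ℝ) ^ 4 := one_le_pow₀ hH1'
        nlinarith [mul_le_mul_of_nonneg_right e2 (sq_nonneg (H : ℝ))]
      calc (H : ℝ) * ((20 * (m : ℝ) ^ 2 * (H : ℝ) ^ 2 + 1) * (H + 1))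
          ≤ (H : ℝ) * ((721 * (H : ℝ) ^ 4) * (H + H)) := by gcongr
        _ = 1442 * (H : ℝ) ^ 6 := by ring
    calc (∑ i ∈ Finset.range H, (ind ((BB i).1 (l ++ [q]) \ (BB (i + 1)).1 (l ++ [q])) * q) ⬝ᵥ y) ^ 2
        ≤ H * ∑ i ∈ Finset.range H, ((ind ((BB i).1 (l ++ [q]) \ (BB (i + 1)).1 (l ++ [q])) * q) ⬝ᵥ y) ^ 2 := by
          have := sq_sum_le_card_mul_sum_sq (s := Finset.range H)
            (f := fun i => (ind ((BB i).1 (l ++ [q]) \ (BB (i + 1)).1 (l ++ [q])) * q) ⬝ᵥ y)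
          rwa [Finset.card_range] at this
      _ ≤ H * ∑ i ∈ Finset.range H, (m * (4 * m / b) + 1) * (H + 1) * qf (G (BB i) (l ++ [q])) y := by
          gcongr with i hi
          exact hG4 (BB i) l q hP y
      _ = (H : ℝ) * ((m * (4 * m / b) + 1) * (H + 1)) * ∑ i ∈ Finset.range H, qf (G (BB i) (l ++ [q])) y := by
          rw [← Finset.mul_sum]; ring
      _ ≤ _ := by
          apply mul_le_mul_of_nonneg_right hc
          exact Finset.sum_nonneg fun i _ => (hG1 _ _).nonneg y

lemma qf_expand (X : Matrix (Fin n) (Fin n) ℝ) (y : Fin n → ℝ) :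
    qf X y = ∑ i, ∑ j, y i * (X i j * y j) := by
  simp [qf, dotProduct, mulVec, Finset.mul_sum]

lemma hasSum_qf {X : ℕ → Matrix (Fin n) (Fin n) ℝ} {Y : Matrix (Fin n) (Fin n) ℝ}
    (h : ∀ i j, HasSum (fun k => X k i j) (Y i j)) (y : Fin n → ℝ) :
    HasSum (fun k => qf (X k) y) (qf Y y) := by
  simp only [qf_expand]
  exact hasSum_sum fun i _ => hasSum_sum fun j _ => ((h i j).mul_right (y j)).mul_left (y i)

lemma PSD.hasSum {X : ℕ → Matrix (Fin n) (Fin n) ℝ} {Y : Matrix (Fin n) (Fin n) ℝ}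
    (h : ∀ i j, HasSum (fun k => X k i j) (Y i j)) (hX : ∀ k, PSD (X k)) : PSD Y := by
  refine ⟨?_, fun y => (hasSum_qf h y).nonneg fun k => (hX k).nonneg y⟩
  ext i j
  have h1 := h j i
  have e : (fun k => X k j i) = fun k => X k i j := by
    funext k
    exact congrFun (congrFun (hX k).symm i) j
  rw [e] at h1
  exact h1.unique (h i j)

lemma PSD.entry_le {X : Matrix (Fin n) (Fin n) ℝ} (hX : PSD X) (hd : ∀ j, X j j ≤ 1) (i j : Fin n) :
    |X i j| ≤ 1 := by
  have h := hX.cauchy (Pi.single i 1) (Pi.single j 1)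
  rw [qf_single, qf_single] at h
  have e : (Pi.single i 1 : Fin n → ℝ) ⬝ᵥ (X *ᵥ Pi.single j 1) = X i j := by simp
  rw [e] at h
  have h1 : 0 ≤ X i i := qf_single X i ▸ hX.nonneg _
  rw [← sq_le_one_iff_abs_le_one]
  exact h.trans (mul_le_one₀ (hd i) (qf_single X j ▸ hX.nonneg _) (hd j))

lemma sigma_exists (c : ℝ) (hc : 0 < c) : ∃ c' : ℝ, 0 < c' ∧
    Summable (fun k : ℕ => c' / ((1 + k : ℝ) ^ (1 + 2 * c))) ∧
    ∑' k : ℕ, c' / ((1 + k : ℝ) ^ (1 + 2 * c)) ≤ 1 / 2 := by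
  have hs : Summable (fun k : ℕ => 1 / ((1 + k : ℝ) ^ (1 + 2 * c))) := by
    have h := (Real.summable_one_div_nat_rpow (p := 1 + 2 * c)).2 (by linarith)
    have h2 := (summable_nat_add_iff 1).2 h
    refine h2.congr fun k => ?_
    push_cast; rw [add_comm]
  set S := ∑' k : ℕ, 1 / ((1 + k : ℝ) ^ (1 + 2 * c)) with hS
  have hS0 : 0 ≤ S := tsum_nonneg fun k => by positivity
  have e : (fun k : ℕ => 1 / (2 * (S + 1)) / ((1 + k : ℝ) ^ (1 + 2 * c))) =
      fun k : ℕ => 1 / (2 * (S + 1)) * (1 / ((1 + k : ℝ) ^ (1 + 2 * c))) := by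
    funext k; ring
  refine ⟨1 / (2 * (S + 1)), by positivity, ?_, ?_⟩
  · rw [e]; exact hs.mul_left _
  · rw [e, tsum_mul_left, ← hS, one_div_mul_eq_div, div_le_div_iff₀ (by positivity) (by norm_num)]
    linarith

/-- scale of the `k`-th guess -/
noncomputable def sc (u : (Fin n → ℝ) → ℝ) (l : List (Fin n → ℝ)) (k : ℕ) : ℝ :=
  2 ^ (k + 1) * (l.head?.map u).getD 0

lemma map_sc (u : (Fin n → ℝ) → ℝ) (l : List (Fin n → ℝ)) (q : Fin n → ℝ) (k : ℕ) :
    l.map (fun z => (sc u (l ++ [q]) k)⁻¹ • z) = l.map (fun z => (sc u l k)⁻¹ • z) := by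
  cases l <;> simp [sc]

lemma combine (n : ℕ) (u : (Fin n → ℝ) → ℝ) (σ : ℕ → ℝ) (hσ : ∀ k, 0 < σ k)
    (hs : Summable σ) (hs2 : ∑' k, σ k ≤ 1 / 2) :
    ∃ M : List (Fin n → ℝ) → Matrix (Fin n) (Fin n) ℝ,
      (∀ l, PD (M l) (1 / 2)) ∧ (∀ l q, PSD (M (l ++ [q]) - M l)) ∧ (∀ l j, M l j j ≤ 1) ∧
      (∀ l q k, 0 < sc u (l ++ [q]) k →
        (∃ (r : ℕ) (p : Fin r → Fin n → ℝ), Prom ((l ++ [q]).map fun z => (sc u (l ++ [q]) k)⁻¹ • z) p) → ∀ y,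
        (q ⬝ᵥ y) ^ 2 ≤ (sc u (l ++ [q]) k) ^ 2 * (1442 * ((Nat.log 2 n + 1 : ℕ) : ℝ) ^ 6 / σ k) *
          qf (M (l ++ [q])) y) := by
  obtain ⟨A, hA1, hA2, hA3, hA4⟩ := fixed n
  set X : List (Fin n → ℝ) → ℕ → Matrix (Fin n) (Fin n) ℝ := fun l k =>
    σ k • A (l.map fun z => (sc u l k)⁻¹ • z) with hX
  have hXs : ∀ l i j, Summable (fun k => X l k i j) := by
    intro l i j
    refine Summable.of_norm_bounded hs fun k => ?_
    simp only [hX, Matrix.smul_apply, smul_eq_mul, Real.norm_eq_abs, abs_mul, abs_of_pos (hσ k)]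
    exact mul_le_of_le_one_right (hσ k).le ((hA1 _).entry_le (hA3 _) i j)
  set Y : List (Fin n → ℝ) → Matrix (Fin n) (Fin n) ℝ := fun l => Matrix.of fun i j => ∑' k, X l k i j with hY
  have hXY : ∀ l i j, HasSum (fun k => X l k i j) (Y l i j) := fun l i j => (hXs l i j).hasSum
  have hXp : ∀ l k, PSD (X l k) := fun l k => (hA1 _).smul (hσ k).le
  have hYp : ∀ l, PSD (Y l) := fun l => PSD.hasSum (hXY l) (hXp l)
  refine ⟨fun l => Y l + (1 / 2 : ℝ) • 1, fun l => (hYp l).toPD (by norm_num), ?_, ?_, ?_⟩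
  · intro l q
    have e : Y (l ++ [q]) + (1 / 2 : ℝ) • 1 - (Y l + (1 / 2 : ℝ) • 1) = Y (l ++ [q]) - Y l := by abel
    beta_reduce
    rw [e]
    refine PSD.hasSum (X := fun k => X (l ++ [q]) k - X l k) ?_ ?_
    · intro i j
      exact (hXY _ i j).sub (hXY _ i j)
    · intro k
      simp only [hX, ← smul_sub]
      refine PSD.smul ?_ (hσ k).le
      rw [← map_sc u l q k, List.map_append]
      exact hA2 _ _
  · intro l j
    have h1 : Y l j j ≤ ∑' k, σ k := by
      refine (hXY l j j).tsum_eq ▸ (hXs l j j).tsum_le_tsum (fun k => ?_) hs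
      simp only [hX, Matrix.smul_apply, smul_eq_mul]
      exact mul_le_of_le_one_right (hσ k).le (hA3 _ j)
    simp only [Matrix.add_apply, Matrix.smul_apply, one_apply_eq, smul_eq_mul]
    linarith
  · intro l q k hsc hP y
    set s := sc u (l ++ [q]) k with hsd
    have h1 : σ k * qf (A ((l ++ [q]).map fun z => s⁻¹ • z)) y ≤ qf (Y (l ++ [q])) y := by
      have := le_hasSum (hasSum_qf (hXY (l ++ [q])) y) k (fun k' _ => (hXp _ k').nonneg y)
      simpa only [hX, qf_smul] using this
    have h2 : qf (Y (l ++ [q])) y ≤ qf (Y (l ++ [q]) + (1 / 2 : ℝ) • 1) y := by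
      rw [qf_add, qf_smul, qf_one]
      linarith [dot_self_nonneg y]
    rw [List.map_append] at h1 hP
    have h3 := hA4 (l.map fun z => s⁻¹ • z) (s⁻¹ • q) hP y
    rw [smul_dotProduct, smul_eq_mul, mul_pow] at h3
    have h4 : (q ⬝ᵥ y) ^ 2 = s ^ 2 * (s⁻¹ ^ 2 * (q ⬝ᵥ y) ^ 2) := by
      field_simp
    set D : ℝ := 1442 * ((Nat.log 2 n + 1 : ℕ) : ℝ) ^ 6 with hD
    have hD0 : 0 ≤ D := by positivity
    rw [h4, mul_assoc]
    apply mul_le_mul_of_nonneg_left _ (sq_nonneg s)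
    refine h3.trans ?_
    rw [div_mul_eq_mul_div, le_div_iff₀ (hσ k), mul_assoc]
    apply mul_le_mul_of_nonneg_left _ hD0
    rw [mul_comm]
    exact h1.trans h2

open scoped MatrixOrder ComplexOrder in
lemma PSD.factor {X : Matrix (Fin n) (Fin n) ℝ} (hX : PSD X) :
    ∃ D : Fin n → Fin n → ℝ, ∀ a b, ∑ i, D i a * D i b = X a b := by
  have h : X.PosSemidef := by
    rw [Matrix.posSemidef_iff_dotProduct_mulVec]
    refine ⟨?_, fun x => ?_⟩
    · rw [Matrix.IsHermitian, conjTranspose_eq_transpose_of_trivial, hX.symm]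
    · exact hX.nonneg x
  obtain ⟨B, hB⟩ := CStarAlgebra.nonneg_iff_eq_star_mul_self.mp h.nonneg
  refine ⟨B, fun a b => ?_⟩
  rw [hB, Matrix.mul_apply]
  simp [star_apply]

lemma sum_getD (L : List (Fin n → ℝ)) (f : (Fin n → ℝ) → ℝ) :
    ∑ i ∈ Finset.range L.length, f (L.getD i 0) = (L.map f).sum := by
  induction L with
  | nil => simp
  | cons a L ih =>
    rw [List.length_cons, Finset.sum_range_succ', List.map_cons, List.sum_cons, ← ih, add_comm]
    simp

lemma realize (M : List (Fin n → ℝ) → Matrix (Fin n) (Fin n) ℝ)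
    (hM : ∀ l, PD (M l) (1 / 2)) (hM2 : ∀ l q, PSD (M (l ++ [q]) - M l)) :
    ∃ (k : List (Fin n → ℝ) → ℕ) (row : List (Fin n → ℝ) → ℕ → (Fin n → ℝ))
      (ℓ : List (Fin n → ℝ) → ℕ → ℝ),
      (∀ l q, k l ≤ k (l ++ [q]) ∧
        (∀ i < k l, row (l ++ [q]) i = row l i) ∧
        (∀ j, ∑ i ∈ Finset.range (k (l ++ [q])), ℓ (l ++ [q]) i * row (l ++ [q]) i j = q j)) ∧
      (∀ l j, ∑ i ∈ Finset.range (k l), (row l i j) ^ 2 = M l j j) ∧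
      (∀ l q, ∑ i ∈ Finset.range (k (l ++ [q])), (ℓ (l ++ [q]) i) ^ 2 = val (M (l ++ [q])) q) := by
  obtain ⟨D0, hD0⟩ := (hM []).psd.factor
  choose D hD using fun l q => (hM2 l q).factor
  let rows : List (Fin n → ℝ) → List (Fin n → ℝ) := fun l =>
    List.reverseRecOn l (List.ofFn D0) (fun l q L => L ++ List.ofFn (D l q))
  have hr0 : rows [] = List.ofFn D0 := by simp [rows]
  have hrs : ∀ l q, rows (l ++ [q]) = rows l ++ List.ofFn (D l q) := by
    intro l q; simp only [rows, List.reverseRecOn_concat]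
  have hg : ∀ l a b, ((rows l).map fun v => v a * v b).sum = M l a b := by
    intro l a b
    induction l using List.reverseRecOn with
    | nil => rw [hr0, List.map_ofFn, List.sum_ofFn]; exact hD0 a b
    | append_singleton l q ih =>
      rw [hrs, List.map_append, List.sum_append, ih, List.map_ofFn, List.sum_ofFn]
      have := hD l q a b
      simp only [Matrix.sub_apply] at this
      simp only [Function.comp_apply]
      rw [this]; ring
  have hg' : ∀ l a b, ∑ i ∈ Finset.range (rows l).length, (rows l).getD i 0 a * (rows l).getD i 0 b = M l a b := by
    intro l a b
    rw [sum_getD (rows l) (fun v => v a * v b), hg]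
  have hℓ : ∀ l w j, ∑ i ∈ Finset.range (rows l).length, ((rows l).getD i 0 ⬝ᵥ w) * (rows l).getD i 0 j =
      (M l *ᵥ w) j := by
    intro l w j
    simp only [dotProduct, Finset.sum_mul, mulVec]
    rw [Finset.sum_comm]
    refine Finset.sum_congr rfl fun a _ => ?_
    rw [← hg', Finset.sum_mul]
    exact Finset.sum_congr rfl fun i _ => by ring
  refine ⟨fun l => (rows l).length, fun l i => (rows l).getD i 0,
    fun l i => (rows l).getD i 0 ⬝ᵥ ((M l)⁻¹ *ᵥ (l.getLastD 0)), ?_, ?_, ?_⟩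
  · intro l q
    beta_reduce
    refine ⟨?_, ?_, ?_⟩
    · rw [hrs, List.length_append]; omega
    · intro i hi
      rw [hrs]
      exact List.getD_append _ _ _ _ hi
    · intro j
      rw [hℓ, List.getLastD_concat, (hM _).mul_inv]
  · intro l j
    rw [← hg' l j j]
    exact Finset.sum_congr rfl fun i _ => by ring
  · intro l q
    beta_reduce
    rw [List.getLastD_concat]
    set w := (M (l ++ [q]))⁻¹ *ᵥ q with hw
    have h1 : ∀ j, ∑ i ∈ Finset.range (rows (l ++ [q])).length,
        ((rows (l ++ [q])).getD i 0 ⬝ᵥ w) * (rows (l ++ [q])).getD i 0 j = q j := by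
      intro j
      rw [hℓ, hw, (hM _).mul_inv]
    rw [val, ← hw]
    simp only [dotProduct] at h1 ⊢
    simp only [← h1, Finset.sum_mul]
    rw [Finset.sum_comm]
    refine Finset.sum_congr rfl fun i _ => ?_
    rw [sq, Finset.mul_sum]
    exact Finset.sum_congr rfl fun a _ => by simp only [Finset.sum_mul]; exact Finset.sum_congr rfl fun b _ => by ring

section gamma
variable {α β : Type*} [Fintype α] [Fintype β]

lemma row_le (M : Matrix α β ℝ) (i : α) : ∑ j, (M i j) ^ 2 ≤ rowNorm2inf M ^ 2 := by
  have h : Real.sqrt (∑ j, (M i j) ^ 2) ≤ rowNorm2inf M :=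
    le_ciSup (f := fun i => Real.sqrt (∑ j, (M i j) ^ 2)) (Set.finite_range _).bddAbove i
  calc ∑ j, (M i j) ^ 2 = Real.sqrt (∑ j, (M i j) ^ 2) ^ 2 :=
        (Real.sq_sqrt (Finset.sum_nonneg fun j _ => sq_nonneg _)).symm
    _ ≤ _ := by gcongr

lemma col_le (M : Matrix α β ℝ) (j : β) : ∑ i, (M i j) ^ 2 ≤ colNorm12 M ^ 2 := by
  have h : Real.sqrt (∑ i, (M i j) ^ 2) ≤ colNorm12 M :=
    le_ciSup (f := fun j => Real.sqrt (∑ i, (M i j) ^ 2)) (Set.finite_range _).bddAbove j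
  calc ∑ i, (M i j) ^ 2 = Real.sqrt (∑ i, (M i j) ^ 2) ^ 2 :=
        (Real.sq_sqrt (Finset.sum_nonneg fun j _ => sq_nonneg _)).symm
    _ ≤ _ := by gcongr

lemma row_nonneg (M : Matrix α β ℝ) : 0 ≤ rowNorm2inf M := Real.iSup_nonneg fun _ => Real.sqrt_nonneg _

lemma col_nonneg (M : Matrix α β ℝ) : 0 ≤ colNorm12 M := Real.iSup_nonneg fun _ => Real.sqrt_nonneg _

lemma entry_le {k : ℕ} (L : Matrix α (Fin k) ℝ) (R : Matrix (Fin k) β ℝ) (i : α) (j : β) :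
    |(L * R) i j| ≤ rowNorm2inf L * colNorm12 R := by
  apply abs_le_of_sq_le_sq _ (mul_nonneg (row_nonneg L) (col_nonneg R))
  rw [Matrix.mul_apply, mul_pow]
  refine (Finset.sum_mul_sq_le_sq_mul_sq _ _ _).trans ?_
  exact mul_le_mul (row_le L i) (col_le R j) (Finset.sum_nonneg fun _ _ => sq_nonneg _) (sq_nonneg _)

lemma gamma2_nonempty {N : ℕ} (Q : Matrix α (Fin N) ℝ) :
    { c : ℝ | ∃ (k : ℕ) (L : Matrix α (Fin k) ℝ) (R : Matrix (Fin k) (Fin N) ℝ),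
    L * R = Q ∧ c = rowNorm2inf L * colNorm12 R }.Nonempty :=
  ⟨_, N, Q, 1, by simp, rfl⟩

lemma entry_le_gamma2 {N : ℕ} (Q : Matrix α (Fin N) ℝ) (i : α) (j : Fin N) : |Q i j| ≤ gamma2 Q := by
  apply le_csInf (gamma2_nonempty Q)
  rintro c ⟨k, L, R, rfl, rfl⟩
  exact entry_le L R i j

lemma exists_prom {N : ℕ} (Q : Matrix α (Fin N) ℝ) (hQ : ∃ i j, Q i j ≠ 0) (s : ℝ) (hs : gamma2 Q < s)
    (l : List (Fin N → ℝ)) (hl : ∀ q ∈ l, ∃ i, q = Q i) :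
    ∃ (r : ℕ) (p : Fin r → Fin N → ℝ), Prom (l.map fun z => s⁻¹ • z) p := by
  obtain ⟨c, ⟨k, L, R, hLR, rfl⟩, hc⟩ := exists_lt_of_csInf_lt (gamma2_nonempty Q) hs
  obtain ⟨i0, j0, h0⟩ := hQ
  have hpos : 0 < rowNorm2inf L * colNorm12 R := by
    have := entry_le L R i0 j0
    rw [hLR] at this
    exact (abs_pos.2 h0).trans_le this
  have hcn : 0 < colNorm12 R := pos_of_mul_pos_right hpos (row_nonneg L)
  have hs0 : 0 < s := hpos.trans hc
  set cn := colNorm12 R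
  refine ⟨k, fun a => cn⁻¹ • R a, ?_, ?_⟩
  · intro j
    simp only [Pi.smul_apply, smul_eq_mul, mul_pow, ← Finset.mul_sum]
    rw [inv_pow, inv_mul_le_one₀ (by positivity)]
    exact col_le R j
  · intro z hz y
    obtain ⟨q, hq, rfl⟩ := List.mem_map.1 hz
    obtain ⟨i, rfl⟩ := hl q hq
    simp only [smul_dotProduct, smul_eq_mul, mul_pow, ← Finset.mul_sum]
    have e : Q i ⬝ᵥ y = ∑ a, L i a * (R a ⬝ᵥ y) := by
      rw [← hLR]
      simp only [dotProduct, Matrix.mul_apply, Finset.sum_mul, Finset.mul_sum]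
      rw [Finset.sum_comm]
      exact Finset.sum_congr rfl fun a _ => Finset.sum_congr rfl fun b _ => by ring
    have h1 : (Q i ⬝ᵥ y) ^ 2 ≤ rowNorm2inf L ^ 2 * ∑ a, (R a ⬝ᵥ y) ^ 2 := by
      rw [e]
      refine (Finset.sum_mul_sq_le_sq_mul_sq _ _ _).trans ?_
      exact mul_le_mul_of_nonneg_right (row_le L i) (Finset.sum_nonneg fun _ _ => sq_nonneg _)
    have h2 : s⁻¹ * rowNorm2inf L ≤ cn⁻¹ := by
      rw [inv_mul_le_iff₀ hs0, ← div_eq_mul_inv, le_div_iff₀ hcn]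
      exact hc.le
    calc s⁻¹ ^ 2 * (Q i ⬝ᵥ y) ^ 2 ≤ s⁻¹ ^ 2 * (rowNorm2inf L ^ 2 * ∑ a, (R a ⬝ᵥ y) ^ 2) := by gcongr
      _ = (s⁻¹ * rowNorm2inf L) ^ 2 * ∑ a, (R a ⬝ᵥ y) ^ 2 := by ring
      _ ≤ _ := by
        apply mul_le_mul_of_nonneg_right _ (Finset.sum_nonneg fun _ _ => sq_nonneg _)
        have := row_nonneg L
        gcongr

end gamma

/-- choice of the guess -/
lemma guess (u g : ℝ) (hu : 0 < u) (hug : u ≤ g) : ∃ k : ℕ, g < 2 ^ (k + 1) * u ∧ 2 ^ (k + 1) * u ≤ 4 * g ∧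
    (1 + k : ℝ) ≤ 2 * (1 + Real.logb 2 (g / u)) := by
  have h1 : 1 ≤ g / u := (one_le_div hu).2 hug
  have hl : 0 ≤ Real.logb 2 (g / u) := Real.logb_nonneg (by norm_num) h1
  set x := Real.logb 2 (g / u) with hx
  have hgx : (2 : ℝ) ^ x = g / u := Real.rpow_logb (by norm_num) (by norm_num) (by linarith)
  have c1 := Nat.le_ceil x
  have c2 := Nat.ceil_lt_add_one hl
  set k := ⌈x⌉₊
  have d1 : g / u ≤ 2 ^ k := by
    rw [← hgx, ← Real.rpow_natCast]
    exact Real.rpow_le_rpow_of_exponent_le (by norm_num) c1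
  have d2 : (2 : ℝ) ^ k ≤ 2 * (g / u) := by
    rw [← hgx, ← Real.rpow_natCast]
    calc (2 : ℝ) ^ (k : ℝ) ≤ 2 ^ (x + 1) := Real.rpow_le_rpow_of_exponent_le (by norm_num) c2.le
      _ = _ := by rw [Real.rpow_add (by norm_num), Real.rpow_one, mul_comm]
  have e1 : g ≤ 2 ^ k * u := by rwa [div_le_iff₀ hu] at d1
  have e2 : 2 ^ k * u ≤ 2 * g := by
    have := mul_le_mul_of_nonneg_right d2 hu.le
    have e : 2 * (g / u) * u = 2 * g := by field_simp
    linarith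
  refine ⟨k, ?_, ?_, ?_⟩
  · rw [pow_succ]; nlinarith
  · rw [pow_succ]; nlinarith
  · linarith

lemma final_bound (c c' g x H kk s C : ℝ) (hc : 0 < c) (hc' : 0 < c') (hg : 0 ≤ g) (hx : 0 ≤ x) (hH : 0 ≤ H)
    (hk : 0 ≤ kk) (hs0 : 0 ≤ s) (hs : s ≤ 4 * g) (hkk : 1 + kk ≤ 2 * (1 + x)) (hC : 0 ≤ C) (H' : ℝ) (hH' : H ≤ H') :
    Real.sqrt (s ^ 2 * (C * H ^ 6 / (c' / (1 + kk) ^ (1 + 2 * c)))) ≤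
      (4 * Real.sqrt (C / c') * 2 ^ (1 / 2 + c)) * g * (1 + x) ^ (1 / 2 + c) * H' ^ 3 := by
  have h1 : (1 + kk) ^ (1 + 2 * c) = ((1 + kk) ^ (1 / 2 + c)) ^ 2 := by
    rw [← Real.rpow_natCast, ← Real.rpow_mul (by linarith)]
    congr 1; push_cast; ring
  have h2 : s ^ 2 * (C * H ^ 6 / (c' / (1 + kk) ^ (1 + 2 * c))) =
      (C / c') * (s * H ^ 3 * (1 + kk) ^ (1 / 2 + c)) ^ 2 := by
    rw [h1]
    have : 0 < (1 + kk) ^ (1 / 2 + c) := Real.rpow_pos_of_pos (by linarith) _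
    field_simp
  have h3 : 0 ≤ (1 + kk) ^ (1 / 2 + c) := Real.rpow_nonneg (by linarith) _
  rw [h2, Real.sqrt_mul (by positivity), Real.sqrt_sq (by positivity)]
  have h4 : (1 + kk) ^ (1 / 2 + c) ≤ 2 ^ (1 / 2 + c) * (1 + x) ^ (1 / 2 + c) := by
    rw [← Real.mul_rpow (by norm_num) (by linarith)]
    exact Real.rpow_le_rpow (by linarith) hkk (by linarith)
  have h5 : s * H ^ 3 * (1 + kk) ^ (1 / 2 + c) ≤ (4 * g) * H' ^ 3 * (2 ^ (1 / 2 + c) * (1 + x) ^ (1 / 2 + c)) := by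
    have : 0 ≤ H' := hH.trans hH'
    gcongr
  calc _ ≤ Real.sqrt (C / c') * ((4 * g) * H' ^ 3 * (2 ^ (1 / 2 + c) * (1 + x) ^ (1 / 2 + c))) := by gcongr
    _ = _ := by ring

lemma log_bound (N : ℕ) (hN : 0 < N) : ((Nat.log 2 N + 1 : ℕ) : ℝ) ≤ Real.logb 2 (2 * N) := by
  have h0 : (0 : ℝ) < N := by exact_mod_cast hN
  rw [Real.le_logb_iff_rpow_le (by norm_num) (by positivity), Real.rpow_natCast, pow_succ, mul_comm]
  have := Nat.pow_log_le_self 2 hN.ne'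
  have : (2 : ℝ) ^ Nat.log 2 N ≤ N := by exact_mod_cast this
  linarith

end OF

/-- An online factorization algorithm in the row arrival model is encoded by functions
of the sequence of rows received so far: `k l` is the number of rows of the current
matrix `R`, `row l i` is its `i`-th row, and `ℓ l` is the current row vector (one
coordinate per row of `R`). -/
theorem stmt7 (c : ℝ) (hc : 0 < c) :
    ∃ K : ℝ, 0 < K ∧ ∀ N : ℕ,
    ∃ (k : List (Fin N → ℝ) → ℕ) (row : List (Fin N → ℝ) → ℕ → (Fin N → ℝ))
      (ℓ : List (Fin N → ℝ) → ℕ → ℝ),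
      -- online structure: `R_t` extends `R_{t-1}` by appending rows, and `ℓ_t R_t = q_t`
      (∀ l q, k l ≤ k (l ++ [q]) ∧
        (∀ i < k l, row (l ++ [q]) i = row l i) ∧
        (∀ j, ∑ i ∈ Finset.range (k (l ++ [q])), ℓ (l ++ [q]) i * row (l ++ [q]) i j = q j)) ∧
      -- the guarantee, when the algorithm is run on the rows of `Q` with `q₁ ≠ 0`
      (∀ (m : ℕ) (Q : Matrix (Fin m) (Fin N) ℝ) (hm : 1 ≤ m), Q ⟨0, hm⟩ ≠ 0 →
        ∀ (t : ℕ) (ht : t ≤ m), 1 ≤ t →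
        ∀ pl : List (Fin N → ℝ), pl = List.ofFn (fun i : Fin t => Q (Fin.castLE ht i)) →
          -- `‖R_t‖_{1→2} ≤ 1`
          (∀ j, Real.sqrt (∑ i ∈ Finset.range (k pl), (row pl i j) ^ 2) ≤ 1) ∧
          -- `‖ℓ_t‖₂ ≤ K·γ₂(Q)·(1+log₂(γ₂(Q)/‖q₁‖_∞))^{1/2+c}·(log₂ 2N)³`
          Real.sqrt (∑ i ∈ Finset.range (k pl), (ℓ pl i) ^ 2) ≤
            K * gamma2 Q *
              (1 + Real.logb 2 (gamma2 Q / (⨆ j, |Q ⟨0, hm⟩ j|))) ^ ((1 : ℝ) / 2 + c) *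
              (Real.logb 2 (2 * N)) ^ 3) := by
  obtain ⟨c', hc', hs, hs2⟩ := OF.sigma_exists c hc
  refine ⟨4 * Real.sqrt (1442 / c') * 2 ^ (1 / 2 + c), by positivity, fun N => ?_⟩
  obtain ⟨M, hM1, hM2, hM3, hM4⟩ := OF.combine N (fun q => ⨆ j, |q j|)
    (fun k : ℕ => c' / ((1 + k : ℝ) ^ (1 + 2 * c))) (fun k => by positivity) hs hs2
  obtain ⟨k, row, ℓ, hA, hB, hC⟩ := OF.realize M hM1 hM2
  refine ⟨k, row, ℓ, hA, ?_⟩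
  intro m Q hm hQ0 t ht ht1 pl hpl
  refine ⟨fun j => ?_, ?_⟩
  · rw [hB]; exact Real.sqrt_le_one.2 (hM3 pl j)
  obtain ⟨t', rfl⟩ : ∃ t', t = t' + 1 := ⟨t - 1, by omega⟩
  obtain ⟨j0, hj0⟩ : ∃ j, Q ⟨0, hm⟩ j ≠ 0 := by
    by_contra h
    push Not at h
    exact hQ0 (funext h)
  have hN : 0 < N := Fin.pos j0
  haveI : Nonempty (Fin N) := ⟨j0⟩
  set u : ℝ := ⨆ j, |Q ⟨0, hm⟩ j| with hu
  have hu0 : 0 < u := (abs_pos.2 hj0).trans_le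
    (le_ciSup (f := fun j => |Q ⟨0, hm⟩ j|) (Set.finite_range _).bddAbove j0)
  have hug : u ≤ gamma2 Q := ciSup_le fun j => OF.entry_le_gamma2 Q _ j
  obtain ⟨κ, hκ1, hκ2, hκ3⟩ := OF.guess u (gamma2 Q) hu0 hug
  have hmem : ∀ q ∈ pl, ∃ i, q = Q i := by
    intro q hq
    rw [hpl, List.mem_ofFn] at hq
    obtain ⟨i, rfl⟩ := hq
    exact ⟨_, rfl⟩
  have hhead : pl.head? = some (Q ⟨0, hm⟩) := by
    rw [hpl, List.ofFn_succ, List.head?_cons]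
    rfl
  have hsc : OF.sc (fun q => ⨆ j, |q j|) pl κ = 2 ^ (κ + 1) * u := by
    simp [OF.sc, hhead, hu]
  have hprom := OF.exists_prom Q ⟨_, j0, hj0⟩ _ hκ1 pl hmem
  obtain ⟨l, q, hlq⟩ : ∃ l q, pl = l ++ [q] := by
    rcases List.eq_nil_or_concat pl with h | ⟨l, q, h⟩
    · rw [h] at hhead; simp at hhead
    · exact ⟨l, q, by simpa using h⟩
  rw [← hsc, hlq] at hprom
  rw [hlq] at hsc
  have h1 := hM4 l q κ (by rw [hsc]; positivity) hprom
  rw [hsc] at h1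
  have h2 := (hM1 (l ++ [q])).val_le q _ h1 (by positivity)
  rw [hlq, hC]
  have hg1 : 0 ≤ gamma2 Q := hu0.le.trans hug
  have hx : 0 ≤ Real.logb 2 (gamma2 Q / u) := Real.logb_nonneg (by norm_num) ((one_le_div hu0).2 hug)
  exact (Real.sqrt_le_sqrt h2).trans (OF.final_bound c c' (gamma2 Q) _ _ κ _ 1442 hc hc' hg1 hx
    (by positivity) (by positivity) (by positivity) hκ2 hκ3 (by norm_num) _ (OF.log_bound N hN))
end
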